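/- arXiv:2006.02880 — 4 statements merged into one kernel-verified Lean document; each statement's English description precedes it below -/
import Mathlib

section
/- If Y is a set of infinite cardinality κ and λ is a cardinal with κ ≤ λ ≤ 2^κ, then there exist 2^λ distinct ω-free filters F on Y such that χ(F) = λ; that is, there is a family of pairwise distinct ω-free filters on Y, indexed by a set of cardinality 2^λ, each of character λ. -/
open Cardinal Set

/-- A filter is ω-free iff some countable subfamily has empty intersection. -/
def OmegaFree {Y : Type} (F : Filter Y) : Prop :=
  ∃ A : Set (Set Y), A.Countable ∧ A ⊆ F.sets ∧ ⋂₀ A = ∅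

/-- The character of a filter: the least cardinality of a filter base generating it. -/
noncomputable def filterChar {Y : Type} (F : Filter Y) : Cardinal :=
  sInf { c : Cardinal | ∃ B : Set (Set Y),
    B ⊆ F.sets ∧ (∀ s ∈ F, ∃ b ∈ B, b ⊆ s) ∧ #B = c }

lemma exists_indep (Y : Type) [Infinite Y] :
    ∃ (C : ℕ → Set Y) (A : Set Y → Set Y), Antitone C ∧ (⋂ n, C n) = ∅ ∧
      ∀ (n : ℕ) (J : Finset (Set Y)) (g : Set Y → Prop), ∃ y ∈ C n, ∀ X ∈ J, (y ∈ A X ↔ g X) := by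
  classical
  have hinf : ℵ₀ ≤ #Y := Cardinal.aleph0_le_mk Y
  have hc : #Y = #(ℕ × Finset Y × Finset (Finset Y)) := by
    simp [Cardinal.mk_prod, Cardinal.mul_eq_self hinf, Cardinal.aleph0_mul_eq hinf]
  obtain ⟨e⟩ := Cardinal.eq.1 hc
  refine ⟨fun n => {y | n ≤ (e y).1},
    fun X => {y | (e y).2.1.filter (· ∈ X) ∈ (e y).2.2}, ?_, ?_, ?_⟩
  · intro m n hmn y hy
    exact le_trans hmn hy
  · ext y
    simp only [mem_iInter, mem_ofPred_eq, mem_empty_iff_false, iff_false, not_forall, not_le]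
    exact ⟨(e y).1 + 1, Nat.lt_succ_self _⟩
  · intro n J g
    have hsep : ∀ p : Set Y × Set Y, p.1 ≠ p.2 → ∃ y, ¬ (y ∈ p.1 ↔ y ∈ p.2) := by
      intro p hp
      by_contra h
      push Not at h
      exact hp (Set.ext h)
    choose! w hw using hsep
    let s : Finset Y := (J ×ˢ J).image w
    refine ⟨e.symm (n, s, (J.filter g).image (fun X => s.filter (· ∈ X))), by simp, ?_⟩
    intro X hX
    simp only [mem_ofPred_eq, Equiv.apply_symm_apply, Finset.mem_image, Finset.mem_filter]
    constructor
    · rintro ⟨X', ⟨hX', hg⟩, heq⟩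
      by_cases hne : X' = X
      · exact hne ▸ hg
      · exfalso
        have h1 := hw (X', X) hne
        have hs : w (X', X) ∈ s :=
          Finset.mem_image_of_mem _ (Finset.mem_product.2 ⟨hX', hX⟩)
        have h2 := congrArg (fun t => w (X', X) ∈ t) heq
        simp only [Finset.mem_filter, hs, true_and] at h2
        exact h1 (iff_of_eq h2)
    · intro hg
      exact ⟨X, ⟨hX, hg⟩, rfl⟩

/-- If `Y` is a set of infinite cardinality `κ` and `κ ≤ λ ≤ 2 ^ κ`, then there exist
`2 ^ λ` distinct ω-free (proper) filters on `Y` of character `λ`. -/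
theorem stmt7 (Y : Type) (κ lam : Cardinal) (hκ : ℵ₀ ≤ κ) (hY : #Y = κ)
    (h1 : κ ≤ lam) (h2 : lam ≤ 2 ^ κ) :
    ∃ G : Set (Filter Y), #G = 2 ^ lam ∧
      ∀ F ∈ G, F.NeBot ∧ OmegaFree F ∧ filterChar F = lam := by
  classical
  subst hY
  have : Infinite Y := Cardinal.infinite_iff.2 hκ
  obtain ⟨C, A, hC, hC0, hind⟩ := exists_indep Y
  rw [← Cardinal.mk_set, Cardinal.le_mk_iff_exists_set] at h2
  obtain ⟨I, rfl⟩ := h2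
  have hI : ℵ₀ ≤ #I := hκ.trans h1
  have : Infinite I := Cardinal.infinite_iff.2 hI
  let B : Set I → ℕ → Finset I → Set Y :=
    fun f n J => {y | y ∈ C n ∧ ∀ i ∈ J, (y ∈ A i ↔ i ∈ f)}
  have hB : ∀ f n n' J J', n ≤ n' → J ⊆ J' → B f n' J' ⊆ B f n J :=
    fun f n n' J J' hn hJ y hy => ⟨hC hn hy.1, fun i hi => hy.2 i (hJ hi)⟩
  have hind' : ∀ (n : ℕ) (J : Finset I) (g : I → Prop),
      ∃ y ∈ C n, ∀ i ∈ J, (y ∈ A i ↔ g i) := by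
    intro n J g
    obtain ⟨y, hy, h⟩ := hind n (J.image Subtype.val) (fun X => ∃ h : X ∈ I, g ⟨X, h⟩)
    refine ⟨y, hy, fun i hi => ?_⟩
    rw [h i (Finset.mem_image_of_mem _ hi)]
    exact ⟨fun ⟨_, h⟩ => h, fun h => ⟨i.2, h⟩⟩
  let F : Set I → Filter Y := fun f =>
    { sets := {s | ∃ n J, B f n J ⊆ s}
      univ_sets := ⟨0, ∅, subset_univ _⟩
      sets_of_superset := fun ⟨n, J, h⟩ hst => ⟨n, J, h.trans hst⟩
      inter_sets := fun ⟨n, J, h⟩ ⟨n', J', h'⟩ => ⟨max n n', J ∪ J', subset_inter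
        ((hB _ _ _ _ _ (le_max_left _ _) Finset.subset_union_left).trans h)
        ((hB _ _ _ _ _ (le_max_right _ _) Finset.subset_union_right).trans h')⟩ }
  have hF : ∀ f s, s ∈ F f ↔ ∃ n J, B f n J ⊆ s := fun f s => Iff.rfl
  have hmem : ∀ f n J, B f n J ∈ F f := fun f n J => ⟨n, J, subset_rfl⟩
  -- membership of a coordinate set forces the coordinate to be in the support
  have key : ∀ f n J i, B f n J ⊆ B f 0 {i} → i ∈ J := by
    intro f n J i h
    by_contra hi
    obtain ⟨y, hy, hyJ⟩ := hind' n (insert i J) (fun j => if j = i then i ∉ f else j ∈ f)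
    have h3 : y ∈ B f n J := ⟨hy, fun j hj => by
      have hji : j ≠ i := fun h => hi (h ▸ hj)
      simpa [hji] using hyJ j (Finset.mem_insert_of_mem hj)⟩
    have h4 := (h h3).2 i (Finset.mem_singleton_self i)
    have h5 := hyJ i (Finset.mem_insert_self i J)
    simp only [if_true] at h5
    tauto
  have hinj : Function.Injective F := by
    intro f g hfg
    ext i
    have a1 := hmem f 0 {i}
    rw [hfg] at a1
    obtain ⟨n, J, h⟩ := (hF _ _).1 a1
    obtain ⟨y, hy, hyJ⟩ := hind' n (insert i J) (fun j => j ∈ g)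
    have h3 : y ∈ B g n J := ⟨hy, fun j hj => hyJ j (Finset.mem_insert_of_mem hj)⟩
    have h4 := (h h3).2 i (Finset.mem_singleton_self i)
    have h5 := hyJ i (Finset.mem_insert_self i J)
    tauto
  refine ⟨range F, ?_, ?_⟩
  · rw [Cardinal.mk_range_eq _ hinj, Cardinal.mk_set]
  rintro _ ⟨f, rfl⟩
  refine ⟨?_, ?_, ?_⟩
  · rw [Filter.neBot_iff, Ne, ← Filter.empty_mem_iff_bot]
    rintro ⟨n, J, h⟩
    obtain ⟨y, hy, hyJ⟩ := hind' n J (fun j => j ∈ f)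
    exact h ⟨hy, hyJ⟩
  · refine ⟨range C, countable_range C, ?_, ?_⟩
    · rintro _ ⟨n, rfl⟩
      exact ⟨n, ∅, fun y hy => hy.1⟩
    · rw [sInter_range, hC0]
  · have hbase : ∃ D : Set (Set Y), D ⊆ (F f).sets ∧ (∀ s ∈ F f, ∃ b ∈ D, b ⊆ s) ∧
        #D ≤ #I := by
      refine ⟨range (fun p : ℕ × Finset I => B f p.1 p.2), ?_, ?_, ?_⟩
      · rintro _ ⟨p, rfl⟩
        exact hmem f _ _
      · rintro s ⟨n, J, h⟩
        exact ⟨_, ⟨(n, J), rfl⟩, h⟩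
      · refine Cardinal.mk_range_le.trans ?_
        simp [Cardinal.mk_prod, Cardinal.aleph0_mul_eq hI]
    obtain ⟨D, hD1, hD2, hD3⟩ := hbase
    apply le_antisymm
    · refine le_trans ?_ hD3
      unfold filterChar
      apply csInf_le'
      exact ⟨D, hD1, hD2, rfl⟩
    · refine le_csInf ⟨_, D, hD1, hD2, rfl⟩ ?_
      rintro c ⟨E, hE1, hE2, rfl⟩
      have hE : ∀ b : E, ∃ J : Finset I, ∃ n, B f n J ⊆ b := fun b => by
        obtain ⟨n, J, h⟩ := hE1 b.2
        exact ⟨J, n, h⟩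
      choose J n hJ using hE
      have hU : (⋃ b, (J b : Set I)) = Set.univ := by
        rw [eq_univ_iff_forall]
        intro i
        obtain ⟨b, hb, hbs⟩ := hE2 _ (hmem f 0 {i})
        exact mem_iUnion.2 ⟨⟨b, hb⟩, key _ _ _ _ ((hJ ⟨b, hb⟩).trans hbs)⟩
      rcases finite_or_infinite E with hfin | hinf
      · exfalso
        have : (⋃ b, (J b : Set I)).Finite := finite_iUnion fun b => (J b).finite_toSet
        rw [hU] at this
        exact infinite_univ this
      · rw [← Cardinal.mk_univ (α := I), ← hU]
        refine (Cardinal.mk_iUnion_le _).trans ?_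
        have hE0 : ℵ₀ ≤ #E := Cardinal.aleph0_le_mk E
        calc #E * ⨆ b, #(J b : Set I) ≤ #E * ℵ₀ := by
              gcongr
              exact ciSup_le' fun b => (Cardinal.lt_aleph0_of_finite _).le
          _ = #E := Cardinal.mul_aleph0_eq hE0
end

section
/- On an infinite set Y of cardinality κ there exist precisely 2^(2^κ) ω-free ultrafilters F with χ(F) = 2^κ; that is, the set of ultrafilters on Y that are ω-free and have character 2^κ has cardinality exactly 2^(2^κ). -/
open Cardinal Set

theorem indep_exists (Y : Type) [Infinite Y] :
    ∃ (A : Set Y → Set Y) (T : ℕ → Set Y), Antitone T ∧ (⋂ n, T n) = ∅ ∧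
      ∀ (P : Finset (Set Y)) (S : Set (Set Y)) (n : ℕ),
        ∃ y ∈ T n, ∀ i ∈ P, (y ∈ A i ↔ i ∈ S) := by
  classical
  have hc : #(Finset Y × Finset (Finset Y) × ℕ) = #Y := by
    have h := Cardinal.aleph0_le_mk Y
    simp [Cardinal.mk_finset_of_infinite, Cardinal.mul_eq_left h h (Cardinal.aleph0_ne_zero),
      Cardinal.mul_eq_self h]
  obtain ⟨e⟩ := Cardinal.eq.1 hc
  refine ⟨fun X => {y | (e.symm y).1.filter (· ∈ X) ∈ (e.symm y).2.1},
    fun n => {y | n ≤ (e.symm y).2.2}, ?_, ?_, ?_⟩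
  · intro m n h y hy
    exact le_trans h hy
  · ext y
    simp only [mem_iInter, mem_setOf_eq, mem_empty_iff_false, iff_false, not_forall, not_le]
    exact ⟨_, Nat.lt_succ_self _⟩
  · intro P S n
    have hd : ∀ X X' : Set Y, ∃ d : Y, X ≠ X' → ¬ (d ∈ X ↔ d ∈ X') := by
      intro X X'
      by_cases h : X = X'
      · exact ⟨Classical.arbitrary Y, fun h' => absurd h h'⟩
      · by_contra! hcon
        exact h (Set.ext fun d => (hcon d).2)
    choose d hd using hd
    let F : Finset Y := (P ×ˢ P).image (fun p => d p.1 p.2)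
    refine ⟨e (F, (P.filter (· ∈ S)).image (fun X => F.filter (· ∈ X)), n), ?_, ?_⟩
    · simp
    · intro X hX
      simp only [mem_setOf_eq, Equiv.symm_apply_apply, Finset.mem_image, Finset.mem_filter]
      constructor
      · rintro ⟨X', ⟨hX', hS⟩, heq⟩
        by_cases h : X' = X
        · exact h ▸ hS
        · exfalso
          apply hd X' X h
          have hF : d X' X ∈ F :=
            Finset.mem_image.2 ⟨(X', X), Finset.mem_product.2 ⟨hX', hX⟩, rfl⟩
          have := Finset.ext_iff.1 heq (d X' X)
          simpa [hF] using this
      · intro hS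
        exact ⟨X, ⟨hX, hS⟩, rfl⟩

theorem exists_uf (Y : Type) [Infinite Y] (A : Set Y → Set Y) (T : ℕ → Set Y) (hT : Antitone T)
    (hI : ∀ (P : Finset (Set Y)) (S : Set (Set Y)) (n : ℕ),
        ∃ y ∈ T n, ∀ i ∈ P, (y ∈ A i ↔ i ∈ S)) (S : Set (Set Y)) :
    ∃ u : Ultrafilter Y, (∀ n, T n ∈ u) ∧ (∀ i, {y | y ∈ A i ↔ i ∈ S} ∈ u) ∧
      ∀ X ∈ u, {i | X ⊆ {y | y ∈ A i ↔ i ∈ S}}.Finite := by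
  classical
  let C : Set Y → Set Y := fun i => {y | y ∈ A i ↔ i ∈ S}
  let G : Set (Set Y) := {g | ∃ i n X, {j | X ⊆ C j}.Infinite ∧ C i ∩ T n ∩ Xᶜ ⊆ g}
  have hE : {j | (∅ : Set Y) ⊆ C j}.Infinite := by
    simpa using Set.infinite_univ
  have hne : (Filter.generate G).NeBot := by
    rw [Filter.generate_neBot_iff]
    intro t htG htf
    have h1 : ∀ g : Set Y, ∃ i n X, g ∈ t → {j | X ⊆ C j}.Infinite ∧ C i ∩ T n ∩ Xᶜ ⊆ g := by
      intro g
      by_cases hg : g ∈ t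
      · obtain ⟨i, n, X, h⟩ := htG hg
        exact ⟨i, n, X, fun _ => h⟩
      · exact ⟨∅, 0, ∅, fun h => absurd h hg⟩
    choose fi fn fX hf using h1
    let P := htf.toFinset.image fi
    have h2 : ∀ g : Set Y, ∃ j, g ∈ t → j ∉ P ∧ fX g ⊆ C j := by
      intro g
      by_cases hg : g ∈ t
      · obtain ⟨j, hj, hj'⟩ := (hf g hg).1.exists_notMem_finset P
        exact ⟨j, fun _ => ⟨hj', hj⟩⟩
      · exact ⟨∅, fun h => absurd h hg⟩
    choose fj hj using h2
    obtain ⟨y, hyT, hy⟩ := hI (P ∪ htf.toFinset.image fj) {i | i ∈ P ↔ i ∈ S}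
      (htf.toFinset.sup fn)
    refine ⟨y, fun g hg => (hf g hg).2 ⟨⟨?_, ?_⟩, ?_⟩⟩
    · have hP : fi g ∈ P := Finset.mem_image_of_mem _ (htf.mem_toFinset.2 hg)
      have := hy (fi g) (Finset.mem_union_left _ hP)
      simpa [hP, C] using this
    · exact hT (Finset.le_sup (f := fn) (htf.mem_toFinset.2 hg)) hyT
    · intro hyX
      have h3 := (hj g hg).2 hyX
      have h4 := hy (fj g) (Finset.mem_union_right _
        (Finset.mem_image_of_mem _ (htf.mem_toFinset.2 hg)))
      have h5 := (hj g hg).1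
      simp only [C, mem_setOf_eq] at h3 h4
      tauto
  have hG : ∀ g ∈ G, g ∈ Ultrafilter.of (Filter.generate G) := fun g hg =>
    Ultrafilter.of_le _ (Filter.mem_generate_of_mem hg)
  refine ⟨Ultrafilter.of (Filter.generate G), fun n => hG _ ⟨∅, n, ∅, hE, fun y hy => hy.1.2⟩,
    fun i => hG _ ⟨i, 0, ∅, hE, fun y hy => hy.1.1⟩, fun X hX => ?_⟩
  by_contra hinf
  exact Ultrafilter.compl_notMem_iff.2 hX (hG _ ⟨∅, 0, X, hinf, fun y hy => hy.2⟩)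

theorem char_eq (Y : Type) [Infinite Y] (u : Ultrafilter Y) (C : Set Y → Set Y)
    (hC : ∀ i, C i ∈ u) (hX : ∀ X ∈ u, {i | X ⊆ C i}.Finite) :
    filterChar (u : Filter Y) = 2 ^ #Y := by
  apply le_antisymm
  · have h : filterChar (u : Filter Y) ≤ #((u : Filter Y).sets) :=
      csInf_le' ⟨(u : Filter Y).sets, subset_rfl, fun s hs => ⟨s, hs, subset_rfl⟩, rfl⟩
    refine h.trans ?_
    rw [← Cardinal.mk_set]
    exact Cardinal.mk_set_le _
  · refine le_csInf ⟨_, (u : Filter Y).sets, subset_rfl, fun s hs => ⟨s, hs, subset_rfl⟩, rfl⟩ ?_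
    rintro c ⟨B, hB, hB', rfl⟩
    choose b hb hbC using fun i => hB' (C i) (hC i)
    have h0 : ℵ₀ < (2 : Cardinal) ^ #Y :=
      (Cardinal.aleph0_le_mk Y).trans_lt (Cardinal.cantor _)
    have h1 : #(Set Y) ≤ #B * ℵ₀ := by
      refine Cardinal.mk_le_mk_mul_of_mk_preimage_le (fun i => (⟨b i, hb i⟩ : B)) ?_
      rintro ⟨x, hx⟩
      refine Cardinal.mk_le_aleph0_iff.2 ?_
      refine Set.Finite.countable ((hX x (hB hx)).subset ?_)
      intro i hi
      have : b i = x := congrArg Subtype.val hi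
      exact this ▸ hbC i
    rw [Cardinal.mk_set] at h1
    have h2 := h1.trans (Cardinal.mul_le_max _ _)
    simp only [le_max_iff, sup_le_iff] at h2
    rcases h2 with (h | h) | h
    · exact h
    · exact absurd h h0.not_ge
    · exact absurd h h0.not_ge

/-- On an infinite set `Y` of cardinality `κ` there exist precisely `2 ^ (2 ^ κ)`
ω-free ultrafilters of character `2 ^ κ`. -/
theorem stmt8 (Y : Type) (κ : Cardinal) (hκ : ℵ₀ ≤ κ) (hY : #Y = κ) :
    #{u : Ultrafilter Y | OmegaFree (u : Filter Y) ∧ filterChar (u : Filter Y) = (2 : Cardinal) ^ κ}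
      = (2 : Cardinal) ^ ((2 : Cardinal) ^ κ) := by
  subst hY
  haveI : Infinite Y := Cardinal.infinite_iff.2 hκ
  rw [← Cardinal.mk_set, ← Cardinal.mk_set]
  apply le_antisymm
  · refine (Cardinal.mk_set_le _).trans ?_
    refine Cardinal.mk_le_of_injective (f := fun u : Ultrafilter Y => (u : Filter Y).sets) ?_
    intro u v h
    exact Ultrafilter.coe_injective (Filter.ext fun s => Set.ext_iff.1 h s)
  · obtain ⟨A, T, hT, hT0, hI⟩ := indep_exists Y
    choose U hU1 hU2 hU3 using exists_uf Y A T hT hI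
    refine Cardinal.mk_le_of_injective (f := fun S => ⟨U S, ?_, ?_⟩) ?_
    · refine ⟨Set.range T, Set.countable_range T, ?_, ?_⟩
      · rintro _ ⟨n, rfl⟩
        exact hU1 S n
      · rw [Set.sInter_range, hT0]
    · rw [char_eq Y (U S) _ (hU2 S) (hU3 S), Cardinal.mk_set]
    · intro S S' h
      have h' : U S = U S' := congrArg Subtype.val h
      ext i
      have h1 := hU2 S i
      have h2 := hU2 S' i
      rw [← h'] at h2
      obtain ⟨y, hy1, hy2⟩ := (U S).nonempty_of_mem (Filter.inter_mem h1 h2)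
      exact hy1.symm.trans hy2
end

section
/- Let κ and λ be infinite cardinals with κ ≤ λ ≤ 2^κ. Then there exist 2^λ mutually non-homeomorphic scattered, strongly zero-dimensional, hereditarily paracompact, perfectly normal topological spaces X with |X| = κ and w(X) = λ. Moreover, if λ ≤ 2^μ < 2^λ for some infinite cardinal μ, such a family can be chosen with all members additionally almost discrete; and if λ = 2^μ for some infinite cardinal μ (in particular if λ = 2^κ), such a family can be chosen with all members additionally almost discrete and extremally disconnected. -/
open Cardinal Set Topology

/-- The weight of a topological space: the least cardinality of a basis for its topology. -/
noncomputable def tweight (X : Type) [TopologicalSpace X] : Cardinal :=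
  sInf { c : Cardinal | ∃ B : Set (Set X), TopologicalSpace.IsTopologicalBasis B ∧ #B = c }

/-- A space is scattered if every nonempty subset has a point isolated in that subset. -/
def Scattered (X : Type) [TopologicalSpace X] : Prop :=
  ∀ S : Set X, S.Nonempty → ∃ x ∈ S, ∃ U : Set X, IsOpen U ∧ U ∩ S = {x}

/-- Strong zero-dimensionality: every closed set contained in an open set can be
separated from its complement by an open-closed set. -/
def StronglyZeroDimensional (X : Type) [TopologicalSpace X] : Prop :=
  ∀ A U : Set X, IsClosed A → IsOpen U → A ⊆ U →
    ∃ V : Set X, IsOpen V ∧ IsClosed V ∧ A ⊆ V ∧ V ⊆ U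

/-- A space is hereditarily paracompact if every subspace is paracompact. -/
def HereditarilyParacompact (X : Type) [TopologicalSpace X] : Prop :=
  ∀ S : Set X, ParacompactSpace S

/-- A space is perfectly normal iff it is normal and every closed set is a Gδ-set. -/
def PerfectlyNormal (X : Type) [TopologicalSpace X] : Prop :=
  NormalSpace X ∧ ∀ C : Set X, IsClosed C → IsGδ C

/-- A Hausdorff space is almost discrete iff the complement of some point is discrete. -/
def AlmostDiscrete (X : Type) [TopologicalSpace X] : Prop :=
  T2Space X ∧ ∃ x : X, DiscreteTopology ({x}ᶜ : Set X)

/-- A space is almost metrizable iff it is perfectly normal and the complement of some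
point is metrizable. -/
def AlmostMetrizable (X : Type) [TopologicalSpace X] : Prop :=
  PerfectlyNormal X ∧ ∃ x : X, TopologicalSpace.MetrizableSpace ({x}ᶜ : Set X)

/-- There is a family of `n` pairwise non-homeomorphic spaces, all with property `P`. -/
def ExistsNonHomeoFamily (n : Cardinal) (P : (X : Type) → TopologicalSpace X → Prop) : Prop :=
  ∃ (ι : Type) (F : ι → Type) (t : (i : ι) → TopologicalSpace (F i)),
    #ι = n ∧ (∀ i, P (F i) (t i)) ∧
      ∀ i j, i ≠ j → IsEmpty (@Homeomorph (F i) (F j) (t i) (t j))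

/-- Every family of pairwise non-homeomorphic spaces with property `P` has at most `n`
members. -/
def NonHomeoUpperBound (n : Cardinal) (P : (X : Type) → TopologicalSpace X → Prop) : Prop :=
  ∀ (ι : Type) (F : ι → Type) (t : (i : ι) → TopologicalSpace (F i)),
    (∀ i, P (F i) (t i)) →
    (∀ i j, i ≠ j → IsEmpty (@Homeomorph (F i) (F j) (t i) (t j))) → #ι ≤ n

/-- There are precisely `n` spaces with property `P`, up to homeomorphism. -/
def PreciselyNonHomeo (n : Cardinal) (P : (X : Type) → TopologicalSpace X → Prop) : Prop :=
  ExistsNonHomeoFamily n P ∧ NonHomeoUpperBound n P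

/-- Every family of open sets has a disjoint open refinement. -/
def UP (X : Type) [TopologicalSpace X] : Prop :=
  ∀ W : Set (Set X), (∀ U ∈ W, IsOpen U) → ∃ g : X → Set X, ∀ x ∈ ⋃₀ W,
    x ∈ g x ∧ IsOpen (g x) ∧ (∃ U ∈ W, g x ⊆ U) ∧ ∀ y ∈ g x, g y = g x

/-- Upper half of the rank condition. -/
def RankA (X : Type) [TopologicalSpace X] (r : X → Ordinal.{0}) : Prop :=
  ∀ x, ∃ U : Set X, IsOpen U ∧ x ∈ U ∧ ∀ y ∈ U, y ≠ x → r y < r x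

/-- Lower half of the rank condition. -/
def RankB (X : Type) [TopologicalSpace X] (r : X → Ordinal.{0}) : Prop :=
  ∀ x, ∀ c < r x, ∀ U : Set X, IsOpen U → x ∈ U → ∃ y ∈ U, y ≠ x ∧ r y = c

theorem RankA.scattered {X : Type} [TopologicalSpace X] {r : X → Ordinal.{0}} (h : RankA X r) :
    Scattered X := by
  intro S hS
  have hwf : WellFounded (fun x y : X => r x < r y) := InvImage.wf r wellFounded_lt
  obtain ⟨x, hx, hmin⟩ := hwf.has_min S hS
  obtain ⟨U, hU, hxU, hr⟩ := h x
  refine ⟨x, hx, U, hU, ?_⟩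
  ext y
  constructor
  · rintro ⟨hy, hyS⟩
    by_contra hne
    exact hmin y hyS (hr y hy hne)
  · rintro rfl
    exact ⟨hxU, hx⟩

theorem UP.szd {X : Type} [TopologicalSpace X] (h : UP X) : StronglyZeroDimensional X := by
  intro A U hA hU hAU
  obtain ⟨g, hg⟩ := h {U, Aᶜ} (by rintro V (rfl | rfl); exacts [hU, hA.isOpen_compl])
  have hall : ∀ x, x ∈ ⋃₀ ({U, Aᶜ} : Set (Set X)) := by
    intro x
    by_cases hx : x ∈ A
    · exact ⟨U, by simp, hAU hx⟩
    · exact ⟨Aᶜ, by simp, hx⟩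
  let V : Set X := {x | (g x ∩ A).Nonempty}
  have key : ∀ x y, y ∈ g x → (y ∈ V ↔ x ∈ V) := by
    intro x y hy
    simp only [V, mem_ofPred_eq, (hg x (hall x)).2.2.2 y hy]
  refine ⟨V, ?_, ?_, ?_, ?_⟩
  · rw [isOpen_iff_forall_mem_open]
    intro x hx
    exact ⟨g x, fun y hy => (key x y hy).2 hx, (hg x (hall x)).2.1, (hg x (hall x)).1⟩
  · rw [← isOpen_compl_iff, isOpen_iff_forall_mem_open]
    intro x hx
    exact ⟨g x, fun y hy hyV => hx ((key x y hy).1 hyV), (hg x (hall x)).2.1, (hg x (hall x)).1⟩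
  · intro x hx
    exact ⟨x, (hg x (hall x)).1, hx⟩
  · rintro x ⟨y, hy, hyA⟩
    obtain ⟨h1, h2, ⟨W, hW, h3⟩, h4⟩ := hg x (hall x)
    rcases hW with rfl | rfl
    · exact h3 h1
    · exact absurd hyA (h3 hy)

theorem UP.hp {X : Type} [TopologicalSpace X] (h : UP X) : HereditarilyParacompact X := by
  intro S
  constructor
  intro α s hs hcov
  choose o ho hos using fun a => isOpen_induced_iff.1 (hs a)
  obtain ⟨g, hg⟩ := h (range o) (by rintro _ ⟨a, rfl⟩; exact ho a)
  have hall : ∀ x : S, x.1 ∈ ⋃₀ (range o) := by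
    intro x
    have : x ∈ ⋃ a, s a := by rw [hcov]; trivial
    obtain ⟨a, ha⟩ := mem_iUnion.1 this
    refine ⟨o a, ⟨a, rfl⟩, ?_⟩
    rw [← hos a] at ha
    exact ha
  let C : Set (Set S) := range fun x : S => (Subtype.val ⁻¹' (g x.1) : Set S)
  refine ⟨C, fun c => c.1, ?_, ?_, ?_, ?_⟩
  · rintro ⟨_, x, rfl⟩
    exact (hg _ (hall x)).2.1.preimage continuous_subtype_val
  · rw [eq_univ_iff_forall]
    intro x
    exact mem_iUnion.2 ⟨⟨_, x, rfl⟩, (hg _ (hall x)).1⟩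
  · intro x
    refine ⟨Subtype.val ⁻¹' (g x.1), ?_, ?_⟩
    · exact ((hg _ (hall x)).2.1.preimage continuous_subtype_val).mem_nhds (hg _ (hall x)).1
    · refine (Set.finite_singleton (⟨_, x, rfl⟩ : C)).subset ?_
      rintro ⟨_, y, rfl⟩ ⟨z, hz1, hz2⟩
      have e1 := (hg _ (hall y)).2.2.2 z.1 hz1
      have e2 := (hg _ (hall x)).2.2.2 z.1 hz2
      refine Subtype.ext ?_
      change (Subtype.val ⁻¹' (g y.1) : Set S) = Subtype.val ⁻¹' (g x.1)
      rw [← e1, e2]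
  · rintro ⟨_, x, rfl⟩
    obtain ⟨U, ⟨a, rfl⟩, hU⟩ := (hg _ (hall x)).2.2.1
    refine ⟨a, ?_⟩
    rw [← hos a]
    exact preimage_mono hU

theorem UP.normal {X : Type} [TopologicalSpace X] (h : UP X) : NormalSpace X := by
  constructor
  intro A B hA hB hAB
  obtain ⟨V, h1, h2, h3, h4⟩ := h.szd A Bᶜ hA hB.isOpen_compl
    (fun x hx hxB => Set.disjoint_left.1 hAB hx hxB)
  refine ⟨V, Vᶜ, h1, h2.isOpen_compl, h3, fun x hx hxV => h4 hxV hx, disjoint_compl_right⟩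

/-- A convenient bundle implying the four basic properties. -/
structure Good (X : Type) [TopologicalSpace X] : Prop where
  up : UP X
  gd : ∀ C : Set X, IsClosed C → IsGδ C
  rk : ∃ r, RankA X r

theorem Good.props {X : Type} [TopologicalSpace X] (h : Good X) :
    Scattered X ∧ StronglyZeroDimensional X ∧ HereditarilyParacompact X ∧ PerfectlyNormal X := by
  obtain ⟨r, hr⟩ := h.rk
  exact ⟨hr.scattered, h.up.szd, h.up.hp, h.up.normal, h.gd⟩

theorem rankA_sum {X Y : Type} [TopologicalSpace X] [TopologicalSpace Y] {r : X → Ordinal.{0}}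
    {r' : Y → Ordinal.{0}} (h : RankA X r) (h' : RankA Y r') :
    RankA (X ⊕ Y) (Sum.elim r r') := by
  rintro (x | x)
  · obtain ⟨U, h1, h2, h3⟩ := h x
    refine ⟨Sum.inl '' U, isOpenMap_inl U h1, ⟨x, h2, rfl⟩, ?_⟩
    rintro _ ⟨y, hy, rfl⟩ hne
    exact h3 y hy (fun e => hne (by rw [e]))
  · obtain ⟨U, h1, h2, h3⟩ := h' x
    refine ⟨Sum.inr '' U, isOpenMap_inr U h1, ⟨x, h2, rfl⟩, ?_⟩
    rintro _ ⟨y, hy, rfl⟩ hne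
    exact h3 y hy (fun e => hne (by rw [e]))

theorem rankB_sum {X Y : Type} [TopologicalSpace X] [TopologicalSpace Y] {r : X → Ordinal.{0}}
    {r' : Y → Ordinal.{0}} (h : RankB X r) (h' : RankB Y r') :
    RankB (X ⊕ Y) (Sum.elim r r') := by
  rintro (x | x) c hc U hU hx
  · obtain ⟨y, h1, h2, h3⟩ := h x c hc _ (isOpen_sum_iff.1 hU).1 hx
    exact ⟨Sum.inl y, h1, by simpa using h2, h3⟩
  · obtain ⟨y, h1, h2, h3⟩ := h' x c hc _ (isOpen_sum_iff.1 hU).2 hx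
    exact ⟨Sum.inr y, h1, by simpa using h2, h3⟩

theorem up_sum {X Y : Type} [TopologicalSpace X] [TopologicalSpace Y] (h : UP X) (h' : UP Y) :
    UP (X ⊕ Y) := by
  intro W hW
  obtain ⟨g, hg⟩ := h ((fun U => Sum.inl ⁻¹' U) '' W)
    (by rintro _ ⟨U, hU, rfl⟩; exact (isOpen_sum_iff.1 (hW U hU)).1)
  obtain ⟨g', hg'⟩ := h' ((fun U => Sum.inr ⁻¹' U) '' W)
    (by rintro _ ⟨U, hU, rfl⟩; exact (isOpen_sum_iff.1 (hW U hU)).2)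
  refine ⟨Sum.elim (fun x => Sum.inl '' g x) (fun x => Sum.inr '' g' x), ?_⟩
  rintro (x | x) ⟨U, hU, hx⟩
  · obtain ⟨h1, h2, ⟨_, ⟨V, hV, rfl⟩, h3⟩, h4⟩ := hg x ⟨_, ⟨U, hU, rfl⟩, hx⟩
    refine ⟨⟨x, h1, rfl⟩, isOpenMap_inl _ h2, ⟨V, hV, ?_⟩, ?_⟩
    · rintro _ ⟨y, hy, rfl⟩
      exact h3 hy
    · rintro _ ⟨y, hy, rfl⟩
      simp [h4 y hy]
  · obtain ⟨h1, h2, ⟨_, ⟨V, hV, rfl⟩, h3⟩, h4⟩ := hg' x ⟨_, ⟨U, hU, rfl⟩, hx⟩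
    refine ⟨⟨x, h1, rfl⟩, isOpenMap_inr _ h2, ⟨V, hV, ?_⟩, ?_⟩
    · rintro _ ⟨y, hy, rfl⟩
      exact h3 hy
    · rintro _ ⟨y, hy, rfl⟩
      simp [h4 y hy]

theorem gd_sum {X Y : Type} [TopologicalSpace X] [TopologicalSpace Y]
    (h : ∀ C : Set X, IsClosed C → IsGδ C) (h' : ∀ C : Set Y, IsClosed C → IsGδ C) :
    ∀ C : Set (X ⊕ Y), IsClosed C → IsGδ C := by
  intro C hC
  obtain ⟨f, hf, e⟩ := isGδ_iff_eq_iInter_nat.1 (h _ (isClosed_sum_iff.1 hC).1)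
  obtain ⟨f', hf', e'⟩ := isGδ_iff_eq_iInter_nat.1 (h' _ (isClosed_sum_iff.1 hC).2)
  refine isGδ_iff_eq_iInter_nat.2 ⟨fun n => Sum.inl '' f n ∪ Sum.inr '' f' n, fun n =>
    (isOpenMap_inl _ (hf n)).union (isOpenMap_inr _ (hf' n)), ?_⟩
  ext (x | x)
  · have := Set.ext_iff.1 e x
    simpa using this
  · have := Set.ext_iff.1 e' x
    simpa using this

theorem good_sum {X Y : Type} [TopologicalSpace X] [TopologicalSpace Y] (h : Good X) (h' : Good Y) :
    Good (X ⊕ Y) := by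
  obtain ⟨r, hr⟩ := h.rk
  obtain ⟨r', hr'⟩ := h'.rk
  exact ⟨up_sum h.up h'.up, gd_sum h.gd h'.gd, _, rankA_sum hr hr'⟩

theorem tweight_eq {X : Type} [TopologicalSpace X] {c : Cardinal.{0}}
    (hle : ∃ B : Set (Set X), TopologicalSpace.IsTopologicalBasis B ∧ #B ≤ c)
    (hge : ∀ B : Set (Set X), TopologicalSpace.IsTopologicalBasis B → c ≤ #B) :
    tweight X = c := by
  obtain ⟨B, hB, hc⟩ := hle
  have hmem : #B ∈ { c : Cardinal | ∃ B : Set (Set X),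
      TopologicalSpace.IsTopologicalBasis B ∧ #B = c } := ⟨B, hB, rfl⟩
  unfold tweight
  apply le_antisymm
  · exact (csInf_le' hmem).trans hc
  · apply le_csInf ⟨_, hmem⟩
    rintro _ ⟨B', hB', rfl⟩
    exact hge B' hB'

theorem rank_homeo {X Y : Type} [TopologicalSpace X] [TopologicalSpace Y] {r : X → Ordinal.{0}}
    {r' : Y → Ordinal.{0}} (hA : RankA X r) (hB : RankB X r) (hA' : RankA Y r') (hB' : RankB Y r')
    (h : X ≃ₜ Y) : ∀ x, r' (h x) = r x := by
  have main : ∀ b : Ordinal.{0}, (∀ x, r x = b → r' (h x) = b) ∧ (∀ y, r' y = b → r (h.symm y) = b) := by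
    intro b
    induction b using WellFoundedLT.induction with
    | ind b ih =>
      constructor
      · intro x hx
        rcases lt_trichotomy (r' (h x)) b with hlt | heq | hgt
        · have := (ih _ hlt).2 (h x) rfl
          rw [h.symm_apply_apply, hx] at this
          exact this.symm
        · exact heq
        · obtain ⟨U, hU, hxU, hr⟩ := hA x
          obtain ⟨y, hy, hne, hry⟩ := hB' (h x) b hgt (h.symm ⁻¹' U) (hU.preimage h.symm.continuous)
            (by simpa using hxU)
          have h1 := hr (h.symm y) hy (fun e => hne (by rw [← e, h.apply_symm_apply]))
          rw [hx] at h1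
          have h2 := (ih _ h1).1 _ rfl
          rw [h.apply_symm_apply, hry] at h2
          exact absurd h1 (by rw [← h2]; exact lt_irrefl _)
      · intro x hx
        rcases lt_trichotomy (r (h.symm x)) b with hlt | heq | hgt
        · have := (ih _ hlt).1 (h.symm x) rfl
          rw [h.apply_symm_apply, hx] at this
          exact this.symm
        · exact heq
        · obtain ⟨U, hU, hxU, hr⟩ := hA' x
          obtain ⟨y, hy, hne, hry⟩ := hB (h.symm x) b hgt (h ⁻¹' U) (hU.preimage h.continuous)
            (by simpa using hxU)
          have h1 := hr (h y) hy (fun e => hne (by rw [← e, h.symm_apply_apply]))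
          rw [hx] at h1
          have h2 := (ih _ h1).2 _ rfl
          rw [h.symm_apply_apply, hry] at h2
          exact absurd h1 (by rw [← h2]; exact lt_irrefl _)
  intro x
  exact (main _).1 x rfl

theorem family_of_classes {I : Type} (F : I → Type) (t : ∀ i, TopologicalSpace (F i))
    (P : (X : Type) → TopologicalSpace X → Prop) (hP : ∀ i, P (F i) (t i)) (c : Cardinal.{0})
    (hI : ℵ₀ ≤ #I) (hc : c < #I)
    (hcl : ∀ i, #{j | Nonempty (@Homeomorph (F i) (F j) (t i) (t j))} ≤ c) :
    ExistsNonHomeoFamily #I P := by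
  let s : Setoid I :=
    { r := fun i j => Nonempty (@Homeomorph (F i) (F j) (t i) (t j))
      iseqv := ⟨fun i => ⟨@Homeomorph.refl _ (t i)⟩, fun ⟨h⟩ => ⟨@Homeomorph.symm _ _ (t _) (t _) h⟩,
        fun ⟨h⟩ ⟨k⟩ => ⟨@Homeomorph.trans _ _ _ (t _) (t _) (t _) h k⟩⟩ }
  refine ⟨Quotient s, fun q => F q.out, fun q => t q.out, ?_, fun q => hP _, ?_⟩
  · apply le_antisymm
    · exact mk_quotient_le
    · by_contra hlt
      push Not at hlt
      have h1 : #I ≤ #(Quotient s) * c := by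
        have e := Cardinal.mk_congr (Equiv.sigmaFiberEquiv (Quotient.mk s)).symm
        rw [e, Cardinal.mk_sigma]
        refine (Cardinal.sum_le_sum _ (fun _ => c) ?_).trans (by simp)
        intro q
        refine le_trans ?_ (hcl q.out)
        refine Cardinal.mk_le_of_injective (f := fun x : {x // Quotient.mk s x = q} =>
          (⟨x.1, ?_⟩ : {j | Nonempty (@Homeomorph (F q.out) (F j) (t q.out) (t j))})) ?_
        · exact Quotient.exact ((Quotient.out_eq q).trans x.2.symm)
        · intro x y hxy
          simpa [Subtype.ext_iff] using hxy
      exact absurd h1 (not_le.2 (Cardinal.mul_lt_of_lt hI hlt hc))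
  · intro i j hij
    constructor
    intro h
    exact hij (by rw [← Quotient.out_eq i, ← Quotient.out_eq j]; exact Quotient.sound ⟨h⟩)

/-- The almost discrete space attached to a filter. -/
def ADS {K : Type} (_F : Filter K) : Type := Option K

/-- The isolated points. -/
def ADS.pt {K : Type} (F : Filter K) (x : K) : ADS F := (some x : Option K)

/-- The special point. -/
def ADS.inf {K : Type} (F : Filter K) : ADS F := (none : Option K)

theorem ADS.cases {K : Type} {F : Filter K} (a : ADS F) : a = ADS.inf F ∨ ∃ x, a = ADS.pt F x := by
  rcases (a : Option K) with _ | x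
  · exact Or.inl rfl
  · exact Or.inr ⟨x, rfl⟩

theorem ADS.pt_ne {K : Type} {F : Filter K} (x : K) : ADS.pt F x ≠ ADS.inf F :=
  Option.some_ne_none x

theorem ADS.pt_inj {K : Type} {F : Filter K} {x y : K} (h : ADS.pt F x = ADS.pt F y) : x = y :=
  Option.some_injective _ h

instance {K : Type} (F : Filter K) : TopologicalSpace (ADS F) where
  IsOpen U := ADS.inf F ∈ U → ADS.pt F ⁻¹' U ∈ F
  isOpen_univ := fun _ => by simp
  isOpen_inter := by
    intro s t hs ht h
    rw [preimage_inter]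
    exact Filter.inter_mem (hs h.1) (ht h.2)
  isOpen_sUnion := by
    rintro s hs ⟨t, ht, h⟩
    exact Filter.mem_of_superset (hs t ht h) (preimage_mono (subset_sUnion_of_mem ht))

theorem ADS.isOpen_iff {K : Type} {F : Filter K} {U : Set (ADS F)} :
    IsOpen U ↔ (ADS.inf F ∈ U → ADS.pt F ⁻¹' U ∈ F) := Iff.rfl

/-- The rank function on an almost discrete space. -/
noncomputable def ADS.rank {K : Type} (F : Filter K) (a : ADS F) : Ordinal.{0} :=
  open Classical in if a = ADS.inf F then 1 else 0

theorem ADS.isOpen_of_notMem {K : Type} {F : Filter K} {U : Set (ADS F)} (h : ADS.inf F ∉ U) :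
    IsOpen U := fun h' => absurd h' h

theorem ADS.isClosed_of_mem {K : Type} {F : Filter K} {U : Set (ADS F)} (h : ADS.inf F ∈ U) :
    IsClosed U := isOpen_compl_iff.1 (ADS.isOpen_of_notMem (fun h' => h' h))

theorem ADS.rankA {K : Type} (F : Filter K) : RankA (ADS F) (ADS.rank F) := by
  intro a
  rcases a.cases with rfl | ⟨x, rfl⟩
  · refine ⟨univ, isOpen_univ, trivial, ?_⟩
    intro y _ hy
    simp [ADS.rank, hy]
  · refine ⟨{ADS.pt F x}, ADS.isOpen_of_notMem (fun h => ADS.pt_ne x (mem_singleton_iff.1 h).symm),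
      rfl, ?_⟩
    intro y hy hne
    exact absurd hy hne

theorem ADS.rankB {K : Type} (F : Filter K) [F.NeBot] : RankB (ADS F) (ADS.rank F) := by
  intro a c hc U hU ha
  rcases a.cases with rfl | ⟨x, rfl⟩
  · have hc0 : c = 0 := by simpa [ADS.rank] using hc
    obtain ⟨x, hx⟩ := Filter.nonempty_of_mem (hU ha)
    exact ⟨ADS.pt F x, hx, ADS.pt_ne x, by simp [ADS.rank, ADS.pt_ne, hc0]⟩
  · simp [ADS.rank, ADS.pt_ne] at hc

theorem ADS.up {K : Type} (F : Filter K) : UP (ADS F) := by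
  classical
  intro W hW
  by_cases h : ∃ U ∈ W, ADS.inf F ∈ U
  · obtain ⟨U, hU, hinf⟩ := h
    refine ⟨fun x => if x ∈ U then U else {x}, ?_⟩
    rintro x ⟨V, hV, hx⟩
    by_cases hxU : x ∈ U
    · simp only [hxU, if_true]
      refine ⟨trivial, hW U hU, ⟨U, hU, subset_rfl⟩, ?_⟩
      intro y hy
      simp [hy]
    · simp only [hxU, if_false]
      refine ⟨rfl, ADS.isOpen_of_notMem ?_, ⟨V, hV, by simpa using hx⟩, ?_⟩
      · intro h
        exact hxU ((mem_singleton_iff.1 h) ▸ hinf)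
      · intro y hy
        rw [mem_singleton_iff.1 hy]
        simp [hxU]
  · refine ⟨fun x => {x}, ?_⟩
    rintro x ⟨V, hV, hx⟩
    refine ⟨rfl, ADS.isOpen_of_notMem ?_, ⟨V, hV, by simpa using hx⟩, ?_⟩
    · intro h'
      exact h ⟨V, hV, (mem_singleton_iff.1 h') ▸ hx⟩
    · intro y hy
      rw [mem_singleton_iff.1 hy]

/-- Countable incompleteness of a filter. -/
def CInc {K : Type} (F : Filter K) : Prop :=
  ∃ T : ℕ → Set K, (∀ k, T k ∈ F) ∧ ∀ x, ∃ k, x ∉ T k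

theorem ADS.good {K : Type} (F : Filter K) (h : CInc F) : Good (ADS F) := by
  refine ⟨ADS.up F, ?_, _, ADS.rankA F⟩
  intro C hC
  by_cases hinf : ADS.inf F ∈ C
  · obtain ⟨T, hT, hx⟩ := h
    refine isGδ_iff_eq_iInter_nat.2 ⟨fun n => C ∪ (insert (ADS.inf F) (ADS.pt F '' T n)), ?_, ?_⟩
    · intro n _
      refine Filter.mem_of_superset (hT n) ?_
      intro x hx
      exact Or.inr (Or.inr ⟨x, hx, rfl⟩)
    · ext a
      simp only [mem_iInter]
      constructor
      · intro ha n
        exact Or.inl ha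
      · intro ha
        rcases a.cases with rfl | ⟨x, rfl⟩
        · exact hinf
        · obtain ⟨k, hk⟩ := hx x
          rcases ha k with h1 | h1 | ⟨y, hy, h1⟩
          · exact h1
          · exact absurd h1 (ADS.pt_ne x)
          · rw [ADS.pt_inj h1] at hy
            exact absurd hy hk
  · exact (ADS.isOpen_of_notMem hinf).isGδ

theorem ADS.almostDiscrete {K : Type} (F : Filter K) (h : CInc F) : AlmostDiscrete (ADS F) := by
  obtain ⟨T, hT, hx⟩ := h
  have sep : ∀ x : K, ∃ u v : Set (ADS F), IsOpen u ∧ IsOpen v ∧ ADS.pt F x ∈ u ∧ ADS.inf F ∈ v ∧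
      Disjoint u v := by
    intro x
    obtain ⟨k, hk⟩ := hx x
    refine ⟨{ADS.pt F x}, {ADS.pt F x}ᶜ,
      ADS.isOpen_of_notMem (fun h => ADS.pt_ne x (mem_singleton_iff.1 h).symm), ?_, rfl,
      fun h => ADS.pt_ne x (mem_singleton_iff.1 h).symm, disjoint_compl_right⟩
    intro _
    refine Filter.mem_of_superset (hT k) ?_
    intro y hy hyx
    rw [ADS.pt_inj (mem_singleton_iff.1 hyx)] at hy
    exact hk hy
  refine ⟨⟨?_⟩, ADS.inf F, ?_⟩
  · intro a b hab
    rcases a.cases with rfl | ⟨x, rfl⟩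
    · rcases b.cases with rfl | ⟨y, rfl⟩
      · exact absurd rfl hab
      · obtain ⟨u, v, h1, h2, h3, h4, h5⟩ := sep y
        exact ⟨v, u, h2, h1, h4, h3, h5.symm⟩
    · rcases b.cases with rfl | ⟨y, rfl⟩
      · exact sep x
      · refine ⟨{ADS.pt F x}, {ADS.pt F y},
          ADS.isOpen_of_notMem (fun h => ADS.pt_ne x (mem_singleton_iff.1 h).symm),
          ADS.isOpen_of_notMem (fun h => ADS.pt_ne y (mem_singleton_iff.1 h).symm), rfl, rfl, ?_⟩
        rw [disjoint_singleton]
        exact hab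
  · rw [discreteTopology_iff_forall_isOpen]
    intro s
    rw [isOpen_induced_iff]
    refine ⟨Subtype.val '' s, ADS.isOpen_of_notMem ?_, ?_⟩
    · rintro ⟨a, _, ha⟩
      exact a.2 ha
    · exact preimage_image_eq _ Subtype.val_injective

theorem ADS.ed {K : Type} (F : Filter K) (h : ∀ s : Set K, s ∈ F ∨ sᶜ ∈ F) :
    ExtremallyDisconnected (ADS F) := by
  constructor
  intro U hU hinf
  rcases h (ADS.pt F ⁻¹' U) with h1 | h1
  · exact Filter.mem_of_superset h1 (preimage_mono subset_closure)
  · by_cases hU' : ADS.inf F ∈ U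
    · exact Filter.mem_of_superset (hU hU') (preimage_mono subset_closure)
    · have hcl : IsClosed U := isOpen_compl_iff.1 (fun _ => h1)
      rw [hcl.closure_eq] at hinf
      exact absurd hinf hU'

/-- `F` has character exactly `c`. -/
def CharEq {K : Type} (F : Filter K) (c : Cardinal.{0}) : Prop :=
  (∃ B : Set (Set K), #B ≤ c ∧ (∀ b ∈ B, b ∈ F) ∧ ∀ s ∈ F, ∃ b ∈ B, b ⊆ s) ∧
    ∀ B : Set (Set K), (∀ b ∈ B, b ∈ F) → (∀ s ∈ F, ∃ b ∈ B, b ⊆ s) → c ≤ #B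

theorem ADS.weight_le {K : Type} (F : Filter K) (c : Cardinal.{0}) (hc : ℵ₀ ≤ c) (hK : #K ≤ c)
    (h : CharEq F c) :
    ∃ B : Set (Set (ADS F)), TopologicalSpace.IsTopologicalBasis B ∧ #B ≤ c := by
  obtain ⟨⟨B, hB, hBF, hbase⟩, -⟩ := h
  refine ⟨range (fun x : K => {ADS.pt F x}) ∪
    (fun b : Set K => insert (ADS.inf F) (ADS.pt F '' b)) '' B, ?_, ?_⟩
  · apply TopologicalSpace.isTopologicalBasis_of_isOpen_of_nhds
    · rintro _ (⟨x, rfl⟩ | ⟨b, hb, rfl⟩)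
      · exact ADS.isOpen_of_notMem (fun h => ADS.pt_ne x (mem_singleton_iff.1 h).symm)
      · intro _
        exact Filter.mem_of_superset (hBF b hb) (fun x hx => Or.inr ⟨x, hx, rfl⟩)
    · intro a U ha hU
      rcases a.cases with rfl | ⟨x, rfl⟩
      · obtain ⟨b, hb, hbU⟩ := hbase _ (hU ha)
        refine ⟨_, Or.inr ⟨b, hb, rfl⟩, Or.inl rfl, ?_⟩
        rintro _ (rfl | ⟨x, hx, rfl⟩)
        · exact ha
        · exact hbU hx
      · exact ⟨_, Or.inl ⟨x, rfl⟩, rfl, by simpa using ha⟩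
  · refine (mk_union_le _ _).trans ?_
    refine (add_le_add (mk_range_le.trans hK) (mk_image_le.trans hB)).trans ?_
    rw [Cardinal.add_eq_self hc]

theorem ADS.weight_ge {K : Type} (F : Filter K) (c : Cardinal.{0})
    (h : CharEq F c) (B : Set (Set (ADS F))) (hB : TopologicalSpace.IsTopologicalBasis B) :
    c ≤ #B := by
  have := h.2 ((fun U => ADS.pt F ⁻¹' U) '' {U ∈ B | ADS.inf F ∈ U}) ?_ ?_
  · refine this.trans (mk_image_le.trans (mk_le_mk_of_subset ?_))
    exact fun U hU => hU.1
  · rintro _ ⟨U, ⟨hU, hinf⟩, rfl⟩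
    exact hB.isOpen hU hinf
  · intro s hs
    have hopen : IsOpen (insert (ADS.inf F) (ADS.pt F '' s)) := by
      intro _
      exact Filter.mem_of_superset hs (fun x hx => Or.inr ⟨x, hx, rfl⟩)
    obtain ⟨U, hU, h1, h2⟩ := hB.exists_subset_of_mem_open (mem_insert _ _) hopen
    refine ⟨_, ⟨U, ⟨hU, h1⟩, rfl⟩, ?_⟩
    intro x hx
    rcases h2 hx with h3 | ⟨y, hy, h3⟩
    · exact absurd h3 (ADS.pt_ne x)
    · rw [← ADS.pt_inj h3]
      exact hy

theorem ADS.weight {K : Type} (F : Filter K) (c : Cardinal.{0}) (hc : ℵ₀ ≤ c) (hK : #K ≤ c)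
    (h : CharEq F c) : tweight (ADS F) = c :=
  tweight_eq (ADS.weight_le F c hc hK h) (ADS.weight_ge F c h)

theorem ADS.card {K : Type} (F : Filter K) (hK : ℵ₀ ≤ #K) : #(ADS F) = #K := by
  have : #(ADS F) = #(Option K) := rfl
  rw [this, Cardinal.mk_option, Cardinal.add_one_eq hK]

theorem ADS.homeo {K : Type} (F G : Filter K) [F.NeBot] [G.NeBot] (h : ADS F ≃ₜ ADS G) :
    ∃ σ : K → K, Filter.map σ F = G := by
  have hr := rank_homeo (ADS.rankA F) (ADS.rankB F) (ADS.rankA G) (ADS.rankB G) h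
  have hinf : h (ADS.inf F) = ADS.inf G := by
    have := hr (ADS.inf F)
    by_contra hne
    simp [ADS.rank, hne] at this
  have hpt : ∀ x, ∃ y, h (ADS.pt F x) = ADS.pt G y := by
    intro x
    rcases (h (ADS.pt F x)).cases with h1 | h1
    · rw [← hinf] at h1
      exact absurd (h.injective h1) (ADS.pt_ne x)
    · exact h1
  choose σ hσ using hpt
  refine ⟨σ, ?_⟩
  ext s
  have e : h ⁻¹' (insert (ADS.inf G) (ADS.pt G '' s)) =
      insert (ADS.inf F) (ADS.pt F '' (σ ⁻¹' s)) := by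
    ext a
    rcases a.cases with rfl | ⟨x, rfl⟩
    · simp [hinf]
    · simp only [mem_preimage, mem_insert_iff, hσ, ADS.pt_ne, false_or]
      constructor
      · rintro ⟨y, hy, hxy⟩
        exact ⟨x, by rw [mem_preimage, ← ADS.pt_inj hxy]; exact hy, rfl⟩
      · rintro ⟨y, hy, hxy⟩
        exact ⟨σ x, by rw [← ADS.pt_inj hxy]; exact hy, rfl⟩
  have key : ∀ (H : Filter K) (s : Set K), IsOpen (insert (ADS.inf H) (ADS.pt H '' s)) ↔ s ∈ H := by
    intro H s
    have e : ADS.pt H ⁻¹' (insert (ADS.inf H) (ADS.pt H '' s)) = s := by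
      ext x
      simp only [mem_preimage, mem_insert_iff, ADS.pt_ne, false_or]
      constructor
      · rintro ⟨y, hy, hxy⟩
        rw [← ADS.pt_inj hxy]
        exact hy
      · intro hx
        exact ⟨x, hx, rfl⟩
    rw [ADS.isOpen_iff, e]
    simp
  rw [Filter.mem_map, ← key F, ← e, h.isOpen_preimage, key G]

theorem charEq_map {M K : Type} (e : M → K) (he : Function.Injective e) (F : Filter M)
    (c : Cardinal.{0}) (h : CharEq F c) : CharEq (Filter.map e F) c := by
  obtain ⟨⟨B, hB, hBF, hbase⟩, hlow⟩ := h
  refine ⟨⟨(fun b => e '' b) '' B, mk_image_le.trans hB, ?_, ?_⟩, ?_⟩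
  · rintro _ ⟨b, hb, rfl⟩
    exact Filter.image_mem_map (hBF b hb)
  · intro s hs
    obtain ⟨b, hb, hbs⟩ := hbase _ hs
    exact ⟨_, ⟨b, hb, rfl⟩, image_subset_iff.2 hbs⟩
  · intro B' h1 h2
    refine (hlow ((fun b => e ⁻¹' b) '' B') ?_ ?_).trans mk_image_le
    · rintro _ ⟨b, hb, rfl⟩
      exact h1 b hb
    · intro s hs
      obtain ⟨b, hb, hbs⟩ := h2 _ (Filter.image_mem_map (m := e) hs)
      refine ⟨_, ⟨b, hb, rfl⟩, ?_⟩
      rw [← preimage_image_eq s he]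
      exact preimage_mono hbs

theorem cInc_map {M K : Type} (e : M → K) (he : Function.Injective e) (F : Filter M)
    (h : CInc F) : CInc (Filter.map e F) := by
  obtain ⟨T, hT, hx⟩ := h
  refine ⟨fun k => e '' T k, fun k => Filter.image_mem_map (hT k), ?_⟩
  intro y
  by_cases hy : ∃ x, e x = y
  · obtain ⟨x, rfl⟩ := hy
    obtain ⟨k, hk⟩ := hx x
    refine ⟨k, ?_⟩
    rintro ⟨z, hz, hzx⟩
    rw [he hzx] at hz
    exact hk hz
  · refine ⟨0, ?_⟩
    rintro ⟨z, hz, hzx⟩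
    exact hy ⟨z, hzx⟩

theorem charEq_low {J M : Type} [Infinite J] (A : J → Set M) (F : Filter M) (hA : ∀ i, A i ∈ F)
    (hfin : ∀ s ∈ F, {i | s ⊆ A i}.Finite) (B : Set (Set M)) (hB : ∀ b ∈ B, b ∈ F)
    (hbase : ∀ s ∈ F, ∃ b ∈ B, b ⊆ s) : #J ≤ #B := by
  by_contra hlt
  push Not at hlt
  choose b hb hbs using fun i => hbase _ (hA i)
  obtain ⟨a, ha⟩ := Cardinal.exists_infinite_fiber (fun i => (⟨b i, hb i⟩ : B)) hlt
  have h1 := hfin a.1 (hB _ a.2)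
  have h2 : ((fun i => (⟨b i, hb i⟩ : B)) ⁻¹' {a}) ⊆ {i | a.1 ⊆ A i} := by
    intro i hi
    have : (⟨b i, hb i⟩ : B) = a := hi
    rw [← this]
    exact hbs i
  exact (Set.infinite_coe_iff.1 ha) (h1.subset h2)

theorem ad_family (κ lam : Cardinal.{0}) (hκ : ℵ₀ ≤ κ) (h1 : κ ≤ lam) {M I : Type}
    (hM : ℵ₀ ≤ #M) (hMκ : #M ≤ κ) (hI : #I = 2 ^ lam) (hlt : (2 : Cardinal) ^ #M < 2 ^ lam)
    (F : I → Filter M) (hinj : Function.Injective F) (hne : ∀ i, (F i).NeBot)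
    (hinc : ∀ i, CInc (F i)) (hch : ∀ i, CharEq (F i) lam)
    (Q : (X : Type) → TopologicalSpace X → Prop)
    (hQ : ∀ i, ∀ K : Type, ∀ e : M → K, Function.Injective e →
      Q (ADS (Filter.map e (F i))) inferInstance) :
    ExistsNonHomeoFamily (2 ^ lam) (fun X t =>
        letI := t
        Scattered X ∧ StronglyZeroDimensional X ∧ HereditarilyParacompact X ∧
          PerfectlyNormal X ∧ #X = κ ∧ tweight X = lam ∧ AlmostDiscrete X ∧ Q X t) := by
  rw [← Cardinal.mk_out κ] at hMκ
  obtain ⟨e⟩ := hMκ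
  have : Nonempty M := by
    rw [← Cardinal.mk_ne_zero_iff]
    intro h0
    rw [h0] at hM
    exact absurd hM (not_le.2 Cardinal.aleph0_pos)
  rw [← hI]
  refine family_of_classes (fun i => ADS (Filter.map e (F i))) (fun i => inferInstance) _ ?_
    (2 ^ #M) ?_ (by rw [hI]; exact hlt) ?_
  · intro i
    have hc := cInc_map e e.injective _ (hinc i)
    obtain ⟨p1, p2, p3, p4⟩ := (ADS.good _ hc).props
    refine ⟨p1, p2, p3, p4, ?_, ?_, ADS.almostDiscrete _ hc, hQ i _ e e.injective⟩
    · rw [ADS.card _ (by rw [Cardinal.mk_out]; exact hκ), Cardinal.mk_out]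
    · exact ADS.weight _ _ (hκ.trans h1) (by rw [Cardinal.mk_out]; exact h1)
        (charEq_map e e.injective _ _ (hch i))
  · rw [hI]
    exact (hκ.trans h1).trans (Cardinal.cantor _).le
  · intro i
    rw [← Cardinal.power_self_eq hM, Cardinal.power_def]
    have : ∀ j : {j | Nonempty (ADS (Filter.map e (F i)) ≃ₜ ADS (Filter.map e (F j)))},
        ∃ ρ : M → M, F j.1 = Filter.map ρ (F i) := by
      rintro ⟨j, ⟨h⟩⟩
      have := hne i
      have := hne j
      obtain ⟨σ, hσ⟩ := ADS.homeo _ _ h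
      refine ⟨Function.invFun e ∘ σ ∘ e, ?_⟩
      have h2 : Filter.map (Function.invFun e) (Filter.map e (F j)) = F j := by
        rw [Filter.map_map, Function.invFun_comp e.injective, Filter.map_id]
      rw [← h2, ← hσ, Filter.map_map, Filter.map_map]
      rfl
    choose ρ hρ using this
    refine Cardinal.mk_le_of_injective (f := ρ) ?_
    intro j j' hj
    apply Subtype.ext
    apply hinj
    rw [hρ j, hρ j', hj]

/-- The underlying set of Hausdorff's independent family. -/
abbrev HM (N : Type) : Type := ℕ × Finset N × Finset (Finset N)

open Classical in
/-- The independent sets, with signs. -/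
def Sg {N J : Type} (j : J → Set N) (f : Set J) (i : J) : Set (HM N) :=
  {m | (m.2.1.filter (fun x => x ∈ j i) ∈ m.2.2) ↔ i ∈ f}

theorem hm_indep {N J : Type} (j : J → Set N) (hj : Function.Injective j) (f : Set J)
    (a : Finset J) (k : ℕ) : ∃ m : HM N, k ≤ m.1 ∧ ∀ i ∈ a, m ∈ Sg j f i := by
  classical
  have hd : ∀ p : J × J, ∃ T : Finset N, p.1 ≠ p.2 → ∃ x ∈ T, ¬ (x ∈ j p.1 ↔ x ∈ j p.2) := by
    rintro ⟨p, q⟩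
    by_cases hpq : p = q
    · exact ⟨∅, fun h => absurd hpq h⟩
    · have : ∃ x, ¬ (x ∈ j p ↔ x ∈ j q) := by
        by_contra h
        push Not at h
        exact hpq (hj (Set.ext h))
      obtain ⟨x, hx⟩ := this
      exact ⟨{x}, fun _ => ⟨x, by simp, hx⟩⟩
  choose d hd using hd
  let T : Finset N := (a ×ˢ a).biUnion d
  refine ⟨(k, T, (a.filter (fun i => i ∈ f)).image (fun i => T.filter (fun x => x ∈ j i))),
    le_rfl, ?_⟩
  intro i hi
  change (T.filter (fun x => x ∈ j i) ∈
    (a.filter (fun i => i ∈ f)).image (fun i => T.filter (fun x => x ∈ j i))) ↔ i ∈ f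
  constructor
  · intro h
    obtain ⟨i', hi', e⟩ := Finset.mem_image.1 h
    rw [Finset.mem_filter] at hi'
    by_cases hne : i = i'
    · rw [hne]
      exact hi'.2
    · obtain ⟨x, hx, hxx⟩ := hd (i, i') hne
      have hxT : x ∈ T := Finset.mem_biUnion.2 ⟨(i, i'), Finset.mk_mem_product hi hi'.1, hx⟩
      have := Finset.ext_iff.1 e x
      simp only [Finset.mem_filter, hxT, true_and] at this
      exact absurd this.symm hxx
  · intro h
    exact Finset.mem_image.2 ⟨i, Finset.mem_filter.2 ⟨hi, h⟩, rfl⟩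

theorem Sg_flip {N J : Type} (j : J → Set N) (f : Set J) (a : Finset J) (i : J) (hi : i ∉ a)
    (m : HM N) (hm : m ∈ Sg j {x | x ∈ a ↔ x ∈ f} i) : m ∉ Sg j f i := by
  classical
  intro h
  have h1 : (m.2.1.filter (fun x => x ∈ j i) ∈ m.2.2) ↔ (i ∈ a ↔ i ∈ f) := hm
  have h2 : (m.2.1.filter (fun x => x ∈ j i) ∈ m.2.2) ↔ i ∈ f := h
  tauto

theorem Sg_same {N J : Type} (j : J → Set N) (f : Set J) (a : Finset J) (i : J) (hi : i ∈ a)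
    (m : HM N) (hm : m ∈ Sg j {x | x ∈ a ↔ x ∈ f} i) : m ∈ Sg j f i := by
  classical
  have h1 : (m.2.1.filter (fun x => x ∈ j i) ∈ m.2.2) ↔ (i ∈ a ↔ i ∈ f) := hm
  change (m.2.1.filter (fun x => x ∈ j i) ∈ m.2.2) ↔ i ∈ f
  tauto

/-- The filter generated by the signed sets and the tails. -/
def Fil {N J : Type} (j : J → Set N) (f : Set J) : Filter (HM N) where
  sets := {s | ∃ (a : Finset J) (k : ℕ), ∀ m : HM N, k ≤ m.1 → (∀ i ∈ a, m ∈ Sg j f i) → m ∈ s}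
  univ_sets := ⟨∅, 0, fun _ _ _ => trivial⟩
  sets_of_superset := by
    rintro s t ⟨a, k, h⟩ hst
    exact ⟨a, k, fun m h1 h2 => hst (h m h1 h2)⟩
  inter_sets := by
    classical
    rintro s t ⟨a, k, h⟩ ⟨a', k', h'⟩
    refine ⟨a ∪ a', max k k', fun m h1 h2 => ⟨h m (le_of_max_le_left h1) ?_,
      h' m (le_of_max_le_right h1) ?_⟩⟩
    · exact fun i hi => h2 i (Finset.mem_union_left _ hi)
    · exact fun i hi => h2 i (Finset.mem_union_right _ hi)

theorem mem_Fil {N J : Type} {j : J → Set N} {f : Set J} {s : Set (HM N)} :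
    s ∈ Fil j f ↔ ∃ (a : Finset J) (k : ℕ), ∀ m : HM N, k ≤ m.1 →
      (∀ i ∈ a, m ∈ Sg j f i) → m ∈ s := Iff.rfl

/-- The filter adding complements of small sets. -/
def Gil {N J : Type} (j : J → Set N) (f : Set J) : Filter (HM N) where
  sets := {s | ∃ (a : Finset J) (k : ℕ) (C : Set (Set (HM N))), C.Finite ∧
    (∀ c ∈ C, {i | c ⊆ Sg j f i}.Infinite) ∧ ∀ m : HM N, k ≤ m.1 →
      (∀ i ∈ a, m ∈ Sg j f i) → (∀ c ∈ C, m ∉ c) → m ∈ s}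
  univ_sets := ⟨∅, 0, ∅, finite_empty, by simp, fun _ _ _ _ => trivial⟩
  sets_of_superset := by
    rintro s t ⟨a, k, C, hC, hC', h⟩ hst
    exact ⟨a, k, C, hC, hC', fun m h1 h2 h3 => hst (h m h1 h2 h3)⟩
  inter_sets := by
    classical
    rintro s t ⟨a, k, C, hC, hC', h⟩ ⟨a', k', D, hD, hD', h'⟩
    refine ⟨a ∪ a', max k k', C ∪ D, hC.union hD, ?_, fun m h1 h2 h3 =>
      ⟨h m (le_of_max_le_left h1) ?_ ?_, h' m (le_of_max_le_right h1) ?_ ?_⟩⟩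
    · rintro c (hc | hc)
      · exact hC' c hc
      · exact hD' c hc
    · exact fun i hi => h2 i (Finset.mem_union_left _ hi)
    · exact fun c hc => h3 c (Or.inl hc)
    · exact fun i hi => h2 i (Finset.mem_union_right _ hi)
    · exact fun c hc => h3 c (Or.inr hc)

theorem mem_Gil {N J : Type} {j : J → Set N} {f : Set J} {s : Set (HM N)} :
    s ∈ Gil j f ↔ ∃ (a : Finset J) (k : ℕ) (C : Set (Set (HM N))), C.Finite ∧
    (∀ c ∈ C, {i | c ⊆ Sg j f i}.Infinite) ∧ ∀ m : HM N, k ≤ m.1 →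
      (∀ i ∈ a, m ∈ Sg j f i) → (∀ c ∈ C, m ∉ c) → m ∈ s := Iff.rfl

theorem Gil_le {N J : Type} (j : J → Set N) (f : Set J) : Gil j f ≤ Fil j f := by
  rintro s ⟨a, k, h⟩
  exact ⟨a, k, ∅, finite_empty, by simp, fun m h1 h2 _ => h m h1 h2⟩

theorem Sg_mem_Fil {N J : Type} (j : J → Set N) (f : Set J) (i : J) : Sg j f i ∈ Fil j f :=
  ⟨{i}, 0, fun m _ h => h i (by simp)⟩

theorem tail_mem_Fil {N J : Type} (j : J → Set N) (f : Set J) (k : ℕ) :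
    {m : HM N | k ≤ m.1} ∈ Fil j f :=
  ⟨∅, k, fun m h _ => h⟩

theorem Gil_neBot {N J : Type} (j : J → Set N) (hj : Function.Injective j) (f : Set J) :
    (Gil j f).NeBot := by
  classical
  rw [← Filter.empty_mem_iff_bot.not.trans (Filter.neBot_iff).symm]
  rintro ⟨a, k, C, hC, hC', h⟩
  have : ∀ c, ∃ i, c ∈ C → i ∉ a ∧ c ⊆ Sg j f i := by
    intro c
    by_cases hc : c ∈ C
    · obtain ⟨i, hi, hia⟩ := (hC' c hc).exists_notMem_finset a
      exact ⟨i, fun _ => ⟨hia, hi⟩⟩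
    · obtain ⟨m, hm⟩ := hm_indep j hj f a k
      by_contra hh
      push Not at hh
      by_cases hJ : Nonempty J
      · exact hc (hh hJ.some).1
      · by_cases hCe : C = ∅
        · subst hCe
          exact h m hm.1 hm.2 (by simp)
        · obtain ⟨c', hc'⟩ := nonempty_iff_ne_empty.2 hCe
          obtain ⟨i, _⟩ := (hC' c' hc').nonempty
          exact hJ ⟨i⟩
  choose g hg using this
  obtain ⟨m, hm1, hm2⟩ := hm_indep j hj {x | x ∈ a ↔ x ∈ f} (a ∪ hC.toFinset.image g) k
  refine h m hm1 ?_ ?_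
  · intro i hi
    exact Sg_same j f a i hi m (hm2 i (Finset.mem_union_left _ hi))
  · intro c hc hmc
    obtain ⟨h1, h2⟩ := hg c hc
    refine Sg_flip j f a (g c) h1 m (hm2 _ (Finset.mem_union_right _ ?_)) (h2 hmc)
    exact Finset.mem_image.2 ⟨c, hC.mem_toFinset.2 hc, rfl⟩

theorem Fil_neBot {N J : Type} (j : J → Set N) (hj : Function.Injective j) (f : Set J) :
    (Fil j f).NeBot := (Gil_neBot j hj f).mono (Gil_le j f)

theorem inj_of_le_Fil {N J : Type} (j : J → Set N) (F : Set J → Filter (HM N))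
    (hne : ∀ f, (F f).NeBot) (hle : ∀ f, F f ≤ Fil j f) : Function.Injective F := by
  classical
  intro f g hfg
  ext i
  by_contra hi
  have h1 := hle f (Sg_mem_Fil j f i)
  have h2 := hle g (Sg_mem_Fil j g i)
  rw [← hfg] at h2
  have := hne f
  obtain ⟨m, hm1, hm2⟩ := Filter.nonempty_of_mem (Filter.inter_mem h1 h2)
  have h3 : (m.2.1.filter (fun x => x ∈ j i) ∈ m.2.2) ↔ i ∈ f := hm1
  have h4 : (m.2.1.filter (fun x => x ∈ j i) ∈ m.2.2) ↔ i ∈ g := hm2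
  tauto

theorem cInc_of_le_Fil {N J : Type} (j : J → Set N) (f : Set J) (F : Filter (HM N))
    (h : F ≤ Fil j f) : CInc F := by
  refine ⟨fun k => {m | k ≤ m.1}, fun k => h (tail_mem_Fil j f k), fun x => ⟨x.1 + 1, ?_⟩⟩
  intro hx
  have : x.1 + 1 ≤ x.1 := hx
  omega

theorem charEq_Fil {N J : Type} [Infinite J] (j : J → Set N) (hj : Function.Injective j)
    (f : Set J) : CharEq (Fil j f) #J := by
  classical
  refine ⟨⟨range (fun p : Finset J × ℕ => {m : HM N | p.2 ≤ m.1 ∧ ∀ i ∈ p.1, m ∈ Sg j f i}),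
    ?_, ?_, ?_⟩, ?_⟩
  · refine mk_range_le.trans ?_
    simp
  · rintro _ ⟨⟨a, k⟩, rfl⟩
    exact ⟨a, k, fun m h1 h2 => ⟨h1, h2⟩⟩
  · rintro s ⟨a, k, h⟩
    exact ⟨_, ⟨⟨a, k⟩, rfl⟩, fun m hm => h m hm.1 hm.2⟩
  · intro B hB hbase
    refine charEq_low (Sg j f) _ (Sg_mem_Fil j f) ?_ B hB hbase
    rintro s ⟨a, k, h⟩
    refine a.finite_toSet.subset ?_
    intro i hi
    by_contra hia
    have hia : i ∉ a := hia
    obtain ⟨m, hm1, hm2⟩ := hm_indep j hj {x | x ∈ a ↔ x ∈ f} (insert i a) k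
    refine Sg_flip j f a i hia m (hm2 i (by simp)) (hi (h m hm1 ?_))
    intro i' hi'
    exact Sg_same j f a i' hi' m (hm2 i' (by simp [hi']))

theorem charEq_Gil {N J : Type} [Infinite J] (j : J → Set N)
    (f : Set J) (hcard : (2 : Cardinal) ^ #(HM N) ≤ #J) (U : Ultrafilter (HM N))
    (hU : (U : Filter (HM N)) ≤ Gil j f) : CharEq (U : Filter (HM N)) #J := by
  refine ⟨⟨{s | s ∈ U}, ?_, fun b hb => hb, fun s hs => ⟨s, hs, subset_rfl⟩⟩, ?_⟩
  · refine (mk_set_le _).trans ?_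
    rw [Cardinal.mk_set]
    exact hcard
  · intro B hB hbase
    refine charEq_low (Sg j f) _ (fun i => hU (Gil_le j f (Sg_mem_Fil j f i))) ?_ B hB hbase
    intro s hs
    by_contra hinf
    have : sᶜ ∈ Gil j f := by
      refine ⟨∅, 0, {s}, finite_singleton s, ?_, ?_⟩
      · rintro c rfl
        exact hinf
      · intro m _ _ h
        exact h s rfl
    exact Ultrafilter.compl_notMem_iff.2 hs (hU this)

theorem card_HM (N : Type) [Infinite N] : #(HM N) = #N := by
  simp [HM]

theorem exists_emb (μ lam : Cardinal.{0}) (h : lam ≤ 2 ^ μ) :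
    ∃ j : lam.out → Set μ.out, Function.Injective j := by
  have : #lam.out ≤ #(Set μ.out) := by
    rw [Cardinal.mk_set, Cardinal.mk_out, Cardinal.mk_out]
    exact h
  obtain ⟨e⟩ := this
  exact ⟨e, e.injective⟩

theorem out_infinite {c : Cardinal.{0}} (h : ℵ₀ ≤ c) : Infinite c.out := by
  rw [Cardinal.infinite_iff, Cardinal.mk_out]
  exact h

theorem part2 (κ lam : Cardinal.{0}) (hκ : ℵ₀ ≤ κ) (h1 : κ ≤ lam) (μ : Cardinal.{0})
    (hμ : ℵ₀ ≤ μ) (hμκ : μ ≤ κ) (hl : lam ≤ 2 ^ μ) (hlt : (2 : Cardinal) ^ μ < 2 ^ lam) :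
    ExistsNonHomeoFamily (2 ^ lam) (fun X t =>
        letI := t
        Scattered X ∧ StronglyZeroDimensional X ∧ HereditarilyParacompact X ∧
          PerfectlyNormal X ∧ #X = κ ∧ tweight X = lam ∧ AlmostDiscrete X ∧ True) := by
  obtain ⟨j, hj⟩ := exists_emb μ lam hl
  have := out_infinite hμ
  have := out_infinite (hκ.trans h1)
  have hM : #(HM μ.out) = μ := by rw [card_HM, Cardinal.mk_out]
  refine ad_family κ lam hκ h1 (M := HM μ.out) (I := Set lam.out) (by rw [hM]; exact hμ)
    (by rw [hM]; exact hμκ) (by rw [Cardinal.mk_set, Cardinal.mk_out]) (by rw [hM]; exact hlt)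
    (fun f => Fil j f) (inj_of_le_Fil j _ (Fil_neBot j hj) (fun f => le_rfl)) (Fil_neBot j hj)
    (fun f => cInc_of_le_Fil j f _ le_rfl) ?_ (fun _ _ => True) (fun _ _ _ _ => trivial)
  intro f
  have := charEq_Fil j hj f
  rwa [Cardinal.mk_out] at this

theorem part3 (κ lam : Cardinal.{0}) (hκ : ℵ₀ ≤ κ) (h1 : κ ≤ lam) (μ : Cardinal.{0})
    (hμ : ℵ₀ ≤ μ) (hμκ : μ ≤ κ) (hl : lam = 2 ^ μ) :
    ExistsNonHomeoFamily (2 ^ lam) (fun X t =>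
        letI := t
        Scattered X ∧ StronglyZeroDimensional X ∧ HereditarilyParacompact X ∧
          PerfectlyNormal X ∧ #X = κ ∧ tweight X = lam ∧ AlmostDiscrete X ∧
          ExtremallyDisconnected X) := by
  obtain ⟨j, hj⟩ := exists_emb μ lam hl.le
  have := out_infinite hμ
  have := out_infinite (hκ.trans h1)
  have hM : #(HM μ.out) = μ := by rw [card_HM, Cardinal.mk_out]
  have hex : ∀ f, ∃ U : Ultrafilter (HM μ.out), (U : Filter (HM μ.out)) ≤ Gil j f := by
    intro f
    have := Gil_neBot j hj f
    exact Ultrafilter.exists_le _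
  choose U hU using hex
  have hle : ∀ f, (U f : Filter (HM μ.out)) ≤ Fil j f := fun f => (hU f).trans (Gil_le j f)
  refine ad_family κ lam hκ h1 (M := HM μ.out) (I := Set lam.out) (by rw [hM]; exact hμ)
    (by rw [hM]; exact hμκ) (by rw [Cardinal.mk_set, Cardinal.mk_out])
    (by rw [hM, ← hl]; exact Cardinal.cantor _)
    (fun f => (U f : Filter (HM μ.out))) (inj_of_le_Fil j _ (fun f => inferInstance) hle)
    (fun f => inferInstance)
    (fun f => cInc_of_le_Fil j f _ (hle f)) ?_ (fun X t => @ExtremallyDisconnected X t) ?_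
  · intro f
    have := charEq_Gil j f (by rw [hM, Cardinal.mk_out, hl]) (U f) (hU f)
    rwa [Cardinal.mk_out] at this
  · intro f K e _
    apply ADS.ed
    intro s
    rw [Filter.mem_map, Filter.mem_map, preimage_compl]
    exact Ultrafilter.mem_or_compl_mem (U f) (e ⁻¹' s)

/-- The tree space attached to a set of labels. -/
def Tr {O : Type} (o : O → Ordinal.{0}) (S : Set O) : Type :=
  {l : List (ℕ × O × ℕ) // l.Pairwise (fun e e' => o e.2.1 < o e'.2.1) ∧
    ∀ e ∈ l, e.2.2 = 0 ∨ e.2.1 ∈ S}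

/-- The class maps. -/
def rho {O : Type} {o : O → Ordinal.{0}} {S : Set O} (k : ℕ) (l : Tr o S) :
    List (ℕ × O × ℕ) := l.1.dropWhile (fun e => decide (k ≤ e.1))

theorem dropWhile_mono {α : Type} (p q : α → Bool) (h : ∀ a, p a = true → q a = true) (l : List α) :
    (l.dropWhile p).dropWhile q = l.dropWhile q := by
  induction l with
  | nil => rfl
  | cons a l ih =>
    by_cases hp : p a = true
    · rw [List.dropWhile_cons_of_pos hp, ih, List.dropWhile_cons_of_pos (h a hp)]
    · rw [List.dropWhile_cons_of_neg hp]

theorem rho_mono {O : Type} {o : O → Ordinal.{0}} {S : Set O} {i k : ℕ} (hik : i ≤ k)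
    {x y : Tr o S} (h : rho k x = rho k y) : rho i x = rho i y := by
  have key : ∀ z : Tr o S, rho i z = (rho k z).dropWhile (fun e => decide (i ≤ e.1)) := by
    intro z
    unfold rho
    rw [dropWhile_mono]
    intro a ha
    simp only [decide_eq_true_eq] at ha ⊢
    omega
  rw [key, key, h]

instance {O : Type} (o : O → Ordinal.{0}) (S : Set O) : TopologicalSpace (Tr o S) where
  IsOpen U := ∀ x ∈ U, ∃ k, ∀ y, rho k y = rho k x → y ∈ U
  isOpen_univ := fun _ _ => ⟨0, fun _ _ => trivial⟩
  isOpen_inter := by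
    rintro s t hs ht x ⟨h1, h2⟩
    obtain ⟨k, hk⟩ := hs x h1
    obtain ⟨i, hi⟩ := ht x h2
    exact ⟨max k i, fun y hy => ⟨hk y (rho_mono (le_max_left _ _) hy),
      hi y (rho_mono (le_max_right _ _) hy)⟩⟩
  isOpen_sUnion := by
    rintro s hs x ⟨t, ht, hx⟩
    obtain ⟨k, hk⟩ := hs t ht x hx
    exact ⟨k, fun y hy => ⟨t, ht, hk y hy⟩⟩

theorem Tr.isOpen_iff {O : Type} {o : O → Ordinal.{0}} {S : Set O} {U : Set (Tr o S)} :
    IsOpen U ↔ ∀ x ∈ U, ∃ k, ∀ y, rho k y = rho k x → y ∈ U := Iff.rfl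

theorem Tr.isOpen_cls {O : Type} {o : O → Ordinal.{0}} {S : Set O} (k : ℕ)
    (P : List (ℕ × O × ℕ) → Prop) : IsOpen {x : Tr o S | P (rho k x)} := by
  intro x hx
  refine ⟨k, fun y hy => ?_⟩
  change P (rho k y)
  rw [hy]
  exact hx

theorem Tr.up {O : Type} (o : O → Ordinal.{0}) (S : Set O) : UP (Tr o S) := by
  classical
  intro W hW
  let Q : Tr o S → ℕ → Prop := fun x k => ∃ U ∈ W, ∀ y, rho k y = rho k x → y ∈ U
  have hQ : ∀ x ∈ ⋃₀ W, ∃ k, Q x k := by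
    rintro x ⟨U, hU, hx⟩
    obtain ⟨k, hk⟩ := hW U hU x hx
    exact ⟨k, U, hU, hk⟩
  have hQeq : ∀ x y k, rho k y = rho k x → (Q x k ↔ Q y k) := by
    intro x y k h
    simp only [Q, h]
  let κ : Tr o S → ℕ := fun x => if h : ∃ k, Q x k then Nat.find h else 0
  refine ⟨fun x => {y | rho (κ x) y = rho (κ x) x}, ?_⟩
  intro x hx
  have hex := hQ x hx
  have hkx : κ x = Nat.find hex := by simp only [κ, hex, dif_pos]
  have hQx : Q x (κ x) := by rw [hkx]; exact Nat.find_spec hex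
  refine ⟨rfl, Tr.isOpen_cls _ (fun l => l = rho (κ x) x), ?_, ?_⟩
  · obtain ⟨U, hU, h⟩ := hQx
    exact ⟨U, hU, fun y hy => h y hy⟩
  · intro y hy
    have hy : rho (κ x) y = rho (κ x) x := hy
    have hQy : Q y (κ x) := (hQeq x y _ hy).1 hQx
    have hexy : ∃ k, Q y k := ⟨_, hQy⟩
    have hky : κ y = Nat.find hexy := by simp only [κ, hexy, dif_pos]
    have h1 : κ y ≤ κ x := by rw [hky]; exact Nat.find_min' _ hQy
    have h2 : κ x ≤ κ y := by
      rw [hkx]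
      apply Nat.find_min'
      rw [hQeq x y _ (rho_mono h1 hy), hky]
      exact Nat.find_spec hexy
    have h3 : κ y = κ x := le_antisymm h1 h2
    ext z
    change rho (κ y) z = rho (κ y) y ↔ rho (κ x) z = rho (κ x) x
    rw [h3, hy]

theorem Tr.gd {O : Type} (o : O → Ordinal.{0}) (S : Set O) :
    ∀ C : Set (Tr o S), IsClosed C → IsGδ C := by
  intro C hC
  refine isGδ_iff_eq_iInter_nat.2 ⟨fun k => {x | ∃ c ∈ C, rho k x = rho k c}, ?_, ?_⟩
  · intro k
    exact Tr.isOpen_cls k (fun l => ∃ c ∈ C, l = rho k c)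
  · ext x
    rw [mem_iInter]
    constructor
    · intro hx k
      exact ⟨x, hx, rfl⟩
    · intro h
      by_contra hx
      obtain ⟨k, hk⟩ := Tr.isOpen_iff.1 hC.isOpen_compl x hx
      obtain ⟨c, hc, hcx⟩ := h k
      exact hk c hcx.symm hc

/-- Basic neighbourhoods. -/
def Nb {O : Type} {o : O → Ordinal.{0}} {S : Set O} (s : Tr o S) (k : ℕ) : Set (Tr o S) :=
  {t | ∃ u, t.1 = u ++ s.1 ∧ ∀ e ∈ u, k ≤ e.1}

theorem Nb_self {O : Type} {o : O → Ordinal.{0}} {S : Set O} (s : Tr o S) (k : ℕ) : s ∈ Nb s k :=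
  ⟨[], rfl, by simp⟩

theorem Nb_open {O : Type} {o : O → Ordinal.{0}} {S : Set O} (s : Tr o S) (k : ℕ) :
    IsOpen (Nb s k) := by
  rintro t ⟨u, hu, hk⟩
  obtain ⟨N, hN⟩ : ∃ N : ℕ, ∀ e ∈ t.1, e.1 < N := by
    refine ⟨(t.1.map (fun e => e.1)).sum + 1, fun e he => ?_⟩
    exact Nat.lt_succ_of_le (List.single_le_sum (by simp) _ (List.mem_map.2 ⟨e, he, rfl⟩))
  refine ⟨max N k, fun y hy => ?_⟩
  have ht : rho (max N k) t = t.1 := by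
    unfold rho
    cases h : t.1 with
    | nil => rfl
    | cons e l =>
      rw [List.dropWhile_cons_of_neg]
      have := hN e (by rw [h]; simp)
      simp only [decide_eq_true_eq, not_le]
      exact lt_of_lt_of_le this (le_max_left _ _)
  rw [ht] at hy
  unfold rho at hy
  refine ⟨y.1.takeWhile (fun e => decide (max N k ≤ e.1)) ++ u, ?_, ?_⟩
  · rw [List.append_assoc, ← hu, ← hy]
    exact List.takeWhile_append_dropWhile.symm
  · intro e he
    rcases List.mem_append.1 he with h | h
    · have := List.mem_takeWhile_imp h
      simp only [decide_eq_true_eq] at this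
      exact (le_max_right _ _).trans this
    · exact hk e h

theorem Nb_sub {O : Type} {o : O → Ordinal.{0}} {S : Set O} (s : Tr o S) (U : Set (Tr o S))
    (hU : IsOpen U) (hs : s ∈ U) : ∃ k, Nb s k ⊆ U := by
  obtain ⟨k, hk⟩ := hU s hs
  refine ⟨k, ?_⟩
  rintro t ⟨u, hu, he⟩
  apply hk
  unfold rho
  rw [hu, List.dropWhile_append_of_pos]
  intro e hee
  simpa using he e hee

/-- The rank of a node. -/
noncomputable def Tr.rank {O : Type} {o : O → Ordinal.{0}} {S : Set O} (c : Ordinal.{0})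
    (s : Tr o S) : Ordinal.{0} :=
  match s.1 with
  | [] => c
  | e :: _ => o e.2.1

theorem Tr.rank_cons {O : Type} {o : O → Ordinal.{0}} {S : Set O} (c : Ordinal.{0})
    (s : Tr o S) (e : ℕ × O × ℕ) (l) (h : s.1 = e :: l) : s.rank c = o e.2.1 := by
  unfold Tr.rank
  rw [h]

theorem Tr.rank_nil {O : Type} {o : O → Ordinal.{0}} {S : Set O} (c : Ordinal.{0})
    (s : Tr o S) (h : s.1 = []) : s.rank c = c := by
  unfold Tr.rank
  rw [h]

theorem Tr.lt_rank {O : Type} {o : O → Ordinal.{0}} {S : Set O} (c : Ordinal.{0})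
    (hc : ∀ b, o b < c) (s t : Tr o S) (u : List (ℕ × O × ℕ)) (h : t.1 = u ++ s.1) :
    ∀ e ∈ u, o e.2.1 < s.rank c := by
  intro e he
  cases hs : s.1 with
  | nil =>
    rw [Tr.rank_nil c s hs]
    exact hc _
  | cons e' l =>
    rw [Tr.rank_cons c s e' l hs]
    have hp := t.2.1
    rw [h, List.pairwise_append] at hp
    exact hp.2.2 e he e' (by rw [hs]; simp)

/-- Adding a child. -/
theorem Tr.child {O : Type} {o : O → Ordinal.{0}} {S : Set O} (c : Ordinal.{0})
    (s : Tr o S) (e : ℕ × O × ℕ) (h : o e.2.1 < s.rank c) (he : e.2.2 = 0 ∨ e.2.1 ∈ S) :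
    ∃ t : Tr o S, t.1 = e :: s.1 := by
  refine ⟨⟨e :: s.1, ?_, ?_⟩, rfl⟩
  · rw [List.pairwise_cons]
    refine ⟨?_, s.2.1⟩
    intro e' he'
    cases hs : s.1 with
    | nil =>
      rw [hs] at he'
      simp at he'
    | cons a l =>
      rw [Tr.rank_cons c s a l hs] at h
      rw [hs] at he'
      rcases List.mem_cons.1 he' with rfl | h'
      · exact h
      · have hp := s.2.1
        rw [hs, List.pairwise_cons] at hp
        exact h.trans (hp.1 _ h')
  · intro e' he'
    rcases List.mem_cons.1 he' with rfl | h'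
    · exact he
    · exact s.2.2 _ h'

theorem Tr.rankA {O : Type} (o : O → Ordinal.{0}) (S : Set O) (c : Ordinal.{0})
    (hc : ∀ b, o b < c) : RankA (Tr o S) (Tr.rank c) := by
  intro s
  refine ⟨Nb s 0, Nb_open s 0, Nb_self s 0, ?_⟩
  rintro t ⟨u, hu, -⟩ hne
  cases u with
  | nil => exact absurd (Subtype.ext hu) hne
  | cons e u =>
    rw [Tr.rank_cons c t e _ hu]
    exact Tr.lt_rank c hc s t _ hu e (by simp)

theorem Tr.rankB {O : Type} (o : O → Ordinal.{0}) (S : Set O) (c : Ordinal.{0})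
    (hc : ∀ b, o b < c) (hsurj : ∀ d < c, ∃ b, o b = d) : RankB (Tr o S) (Tr.rank c) := by
  intro s d hd U hU hs
  obtain ⟨k, hk⟩ := Nb_sub s U hU hs
  have hdc : d < c := by
    cases h : s.1 with
    | nil => rwa [Tr.rank_nil c s h] at hd
    | cons e l =>
      rw [Tr.rank_cons c s e l h] at hd
      exact hd.trans (hc _)
  obtain ⟨b, rfl⟩ := hsurj d hdc
  obtain ⟨t, ht⟩ := Tr.child c s (k, b, 0) hd (Or.inl rfl)
  refine ⟨t, hk ⟨[(k, b, 0)], by simpa using ht, by simp⟩, ?_, Tr.rank_cons c t _ _ ht⟩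
  rintro rfl
  have := congrArg List.length ht
  simp at this

theorem Tr.good {O : Type} (o : O → Ordinal.{0}) (S : Set O) (c : Ordinal.{0})
    (hc : ∀ b, o b < c) : Good (Tr o S) :=
  ⟨Tr.up o S, Tr.gd o S, _, Tr.rankA o S c hc⟩

theorem Tr.card_le {O : Type} (o : O → Ordinal.{0}) (S : Set O) [Infinite O] :
    #(Tr o S) ≤ #O := by
  refine (Cardinal.mk_subtype_le _).trans ?_
  rw [Cardinal.mk_list_eq_mk]
  simp

theorem Tr.weight_le {O : Type} (o : O → Ordinal.{0}) (S : Set O) [Infinite O] :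
    ∃ B : Set (Set (Tr o S)), TopologicalSpace.IsTopologicalBasis B ∧ #B ≤ #O := by
  refine ⟨range (fun p : Tr o S × ℕ => Nb p.1 p.2), ?_, ?_⟩
  · apply TopologicalSpace.isTopologicalBasis_of_isOpen_of_nhds
    · rintro _ ⟨⟨s, k⟩, rfl⟩
      exact Nb_open s k
    · intro s U hs hU
      obtain ⟨k, hk⟩ := Nb_sub s U hU hs
      exact ⟨_, ⟨⟨s, k⟩, rfl⟩, Nb_self s k, hk⟩
  · refine mk_range_le.trans ?_
    rw [Cardinal.mk_prod]
    simp only [Cardinal.lift_id, Cardinal.mk_nat]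
    refine (mul_le_mul' (Tr.card_le o S) (Cardinal.aleph0_le_mk O)).trans ?_
    rw [Cardinal.mul_eq_self (Cardinal.aleph0_le_mk O)]

theorem Tr.flavor {O Y : Type} [TopologicalSpace Y] (o : O → Ordinal.{0})
    (ho : Function.Injective o) (c : Ordinal.{0})
    (hc : ∀ b, o b < c) (hsurj : ∀ d < c, ∃ b, o b = d) (sc : O → O)
    (hsc : ∀ b, o (sc b) = o b + 1) (r' : Y → Ordinal.{0}) (hA' : RankA Y r') (hB' : RankB Y r')
    (hr' : ∀ y, r' y ≤ 1) (S S' : Set O) (h : (Tr o S ⊕ Y) ≃ₜ (Tr o S' ⊕ Y)) (b : O)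
    (hb : 1 ≤ o b) (hbS : b ∈ S) : b ∈ S' := by
  by_contra hbS'
  have hr := rank_homeo (rankA_sum (Tr.rankA o S c hc) hA')
    (rankB_sum (Tr.rankB o S c hc hsurj) hB')
    (rankA_sum (Tr.rankA o S' c hc) hA') (rankB_sum (Tr.rankB o S' c hc hsurj) hB') h
  obtain ⟨x, hx⟩ : ∃ x : Tr o S, x.1 = [(0, sc b, 0)] := ⟨⟨[(0, sc b, 0)], by simp, by simp⟩, rfl⟩
  have hxr : x.rank c = o b + 1 := by rw [Tr.rank_cons c x _ _ hx, hsc]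
  have hbb : o b < o b + 1 := by
    rw [← Order.succ_eq_add_one]
    exact Order.lt_succ _
  obtain ⟨s, hs⟩ : ∃ s : Tr o S', h (Sum.inl x) = Sum.inl s := by
    have h1 := hr (Sum.inl x)
    cases hh : h (Sum.inl x) with
    | inl s => exact ⟨s, rfl⟩
    | inr y =>
      rw [hh] at h1
      simp only [Sum.elim_inr, Sum.elim_inl, hxr] at h1
      have := hr' y
      rw [h1] at this
      exact absurd (hbb.trans_le this) (not_lt.2 hb)
  have hsr : s.rank c = o b + 1 := by
    have h1 := hr (Sum.inl x)
    rw [hs] at h1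
    simpa [hxr] using h1
  have hU : IsOpen (Sum.inl ⁻¹' (h ⁻¹' (Sum.inl '' Nb s 0)) : Set (Tr o S)) :=
    ((isOpenMap_inl _ (Nb_open s 0)).preimage h.continuous).preimage continuous_inl
  obtain ⟨k, hk⟩ := Nb_sub x _ hU ⟨s, Nb_self s 0, hs.symm⟩
  have hV : IsOpen (Sum.inl ⁻¹' (h.symm ⁻¹' (Sum.inl '' Nb x (k + 1))) : Set (Tr o S')) :=
    ((isOpenMap_inl _ (Nb_open x (k + 1))).preimage h.symm.continuous).preimage continuous_inl
  obtain ⟨j, hj⟩ := Nb_sub s _ hV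
    ⟨x, Nb_self x _, by rw [← hs, h.symm_apply_apply]⟩
  have hy : ∀ m : ℕ, ∃ y : Tr o S, y.1 = (k, b, m) :: x.1 := fun m =>
    Tr.child c x (k, b, m) (by rw [hxr]; exact hbb) (Or.inr hbS)
  choose y hy using hy
  have hz : ∀ m, ∃ n, n < j ∧ ∃ z : Tr o S', h (Sum.inl (y m)) = Sum.inl z ∧
      z.1 = (n, b, 0) :: s.1 := by
    intro m
    have hym : y m ∈ Nb x k := ⟨[(k, b, m)], by simpa using hy m, by simp⟩
    obtain ⟨z, ⟨u, hu, -⟩, hz⟩ := hk hym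
    have hzr : z.rank c = o b := by
      have h1 := hr (Sum.inl (y m))
      rw [← hz] at h1
      simpa [Tr.rank_cons c (y m) _ _ (hy m)] using h1
    cases u with
    | nil =>
      have : z = s := Subtype.ext hu
      rw [this, hsr] at hzr
      exact absurd hzr hbb.ne'
    | cons e u =>
      have he : e.2.1 = b := by
        apply ho
        rw [← hzr, Tr.rank_cons c z _ _ hu]
      have hu0 : u = [] := by
        cases u with
        | nil => rfl
        | cons e' u =>
          have h1 := Tr.lt_rank c hc s z _ hu e' (by simp)
          have hp := z.2.1
          rw [hu] at hp
          have h2 := (List.pairwise_cons.1 hp).1 e' (by simp)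
          rw [he] at h2
          rw [hsr, ← Order.succ_eq_add_one, Order.lt_succ_iff] at h1
          exact absurd h2 (not_lt.2 h1)
      subst hu0
      have he0 : e.2.2 = 0 := by
        rcases z.2.2 e (by rw [hu]; simp) with h1 | h1
        · exact h1
        · rw [he] at h1
          exact absurd h1 hbS'
      refine ⟨e.1, ?_, z, hz.symm, ?_⟩
      · by_contra hje
        have hzj : z ∈ Nb s j := ⟨[e], hu, by simpa using hje⟩
        obtain ⟨y', ⟨v, hv, hvk⟩, hy'⟩ := hj hzj
        rw [hz, h.symm_apply_apply] at hy'
        have hyy : y' = y m := Sum.inl_injective hy'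
        rw [hyy, hy m] at hv
        have hv' : v = [(k, b, m)] := by
          have : [(k, b, m)] ++ x.1 = v ++ x.1 := hv
          exact (List.append_cancel_right this).symm
        have := hvk (k, b, m) (by rw [hv']; simp)
        simp at this
      · have hee : e = (e.1, b, 0) := Prod.ext rfl (Prod.ext he he0)
        rw [hu]
        exact congrArg (fun q => q :: s.1) hee
  choose n hn z hz1 hz2 using hz
  have hinj : Function.Injective n := by
    intro m m' hmm
    have h1 : z m = z m' := Subtype.ext (by rw [hz2, hz2, hmm])
    have h2 : y m = y m' := by
      apply Sum.inl_injective (β := Y)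
      apply h.injective
      rw [hz1, hz1, h1]
    have h3 := hy m
    rw [h2, hy m'] at h3
    simpa using h3.symm
  refine Set.infinite_range_of_injective hinj ((Set.finite_Iio j).subset ?_)
  rintro _ ⟨m, rfl⟩
  exact hn m

theorem part1 (κ lam : Cardinal.{0}) (hκ : ℵ₀ ≤ κ) (h1 : κ ≤ lam) (h2 : lam ≤ 2 ^ κ)
    (heq : (2 : Cardinal) ^ lam = 2 ^ κ) :
    ExistsNonHomeoFamily (2 ^ lam) (fun X t =>
      letI := t
      Scattered X ∧ StronglyZeroDimensional X ∧ HereditarilyParacompact X ∧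
        PerfectlyNormal X ∧ #X = κ ∧ tweight X = lam) := by
  obtain ⟨j, hj⟩ := exists_emb κ lam h2
  have := out_infinite hκ
  have := out_infinite (hκ.trans h1)
  have hM : #(HM κ.out) = κ := by rw [card_HM, Cardinal.mk_out]
  let F : Filter (HM κ.out) := Fil j ∅
  have hF : F.NeBot := Fil_neBot j hj ∅
  have hch : CharEq F lam := by
    have := charEq_Fil j hj ∅
    rwa [Cardinal.mk_out] at this
  have hinc : CInc F := cInc_of_le_Fil j ∅ F le_rfl
  let O : Type := κ.ord.ToType
  let o : O → Ordinal.{0} := fun b => ((Ordinal.ToType.mk (o := κ.ord)).symm b).1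
  have hc : ∀ b, o b < κ.ord := fun b => ((Ordinal.ToType.mk (o := κ.ord)).symm b).2
  have ho : Function.Injective o := by
    intro a b hab
    exact (Ordinal.ToType.mk (o := κ.ord)).symm.injective (Subtype.ext hab)
  have hsurj : ∀ d < κ.ord, ∃ b, o b = d := by
    intro d hd
    refine ⟨Ordinal.ToType.mk (o := κ.ord) ⟨d, hd⟩, ?_⟩
    simp only [o, OrderIso.symm_apply_apply]
  have hex : ∀ b, ∃ b', o b' = o b + 1 := by
    intro b
    apply hsurj
    rw [← Order.succ_eq_add_one]
    exact (Cardinal.isSuccLimit_ord hκ).succ_lt (hc b)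
  choose sc hsc using hex
  have hO : #O = κ := Cardinal.mk_ord_toType κ
  have : Infinite O := by
    rw [Cardinal.infinite_iff, hO]
    exact hκ
  have hsci : Function.Injective sc := by
    intro a b hab
    apply ho
    have e := hsc a
    rw [hab, hsc b] at e
    simpa using e.symm
  refine ⟨Set O, fun S => Tr o (sc '' S) ⊕ ADS F, fun S => inferInstance, ?_, ?_, ?_⟩
  · rw [Cardinal.mk_set, hO, heq]
  · intro S
    obtain ⟨p1, p2, p3, p4⟩ := (good_sum (Tr.good o (sc '' S) κ.ord hc) (ADS.good F hinc)).props
    refine ⟨p1, p2, p3, p4, ?_, ?_⟩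
    · rw [Cardinal.mk_sum]
      simp only [Cardinal.lift_id]
      rw [ADS.card F (by rw [hM]; exact hκ), hM]
      exact Cardinal.add_eq_right hκ ((Tr.card_le o _).trans hO.le)
    · apply tweight_eq
      · obtain ⟨B, hB, hBc⟩ := Tr.weight_le o (sc '' S)
        obtain ⟨B', hB', hBc'⟩ := ADS.weight_le F lam (hκ.trans h1) (by rw [hM]; exact h1) hch
        refine ⟨_, hB.sum hB', (mk_union_le _ _).trans ?_⟩
        refine (add_le_add (mk_image_le.trans (hBc.trans (hO.le.trans h1)))
          (mk_image_le.trans hBc')).trans ?_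
        rw [Cardinal.add_eq_self (hκ.trans h1)]
      · intro B hB
        exact (ADS.weight_ge F lam hch _
          (hB.isInducing (f := Sum.inr) IsOpenEmbedding.inr.isInducing)).trans mk_image_le
  · intro S S' hne
    constructor
    intro h
    apply hne
    have hle : ∀ y, ADS.rank F y ≤ 1 := by
      intro y
      unfold ADS.rank
      split_ifs <;> simp
    have key : ∀ S S' : Set O, (Tr o (sc '' S) ⊕ ADS F ≃ₜ Tr o (sc '' S') ⊕ ADS F) → S ⊆ S' := by
      intro S S' h b hb
      have := Tr.flavor o ho κ.ord hc hsurj sc hsc _ (ADS.rankA F) (ADS.rankB F) hle _ _ h (sc b)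
        (by rw [hsc]; simp) ⟨b, hb, rfl⟩
      obtain ⟨b', hb', e⟩ := this
      rw [← hsci e]
      exact hb'
    exact Set.Subset.antisymm (key S S' h) (key S' S h.symm)

theorem ExistsNonHomeoFamily.mono {n : Cardinal.{0}} {P Q : (X : Type) → TopologicalSpace X → Prop}
    (h : ExistsNonHomeoFamily n P) (hPQ : ∀ X t, P X t → Q X t) : ExistsNonHomeoFamily n Q := by
  obtain ⟨ι, F, t, h1, h2, h3⟩ := h
  exact ⟨ι, F, t, h1, fun i => hPQ _ _ (h2 i), h3⟩

/-- Theorem 1: if `κ ≤ λ ≤ 2 ^ κ` (all infinite), then there exist `2 ^ λ` mutually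
non-homeomorphic scattered, strongly zero-dimensional, hereditarily paracompact,
perfectly normal spaces of cardinality `κ` and weight `λ`; if moreover
`λ ≤ 2 ^ μ < 2 ^ λ` for some infinite `μ`, the spaces can be taken almost discrete;
and if `λ = 2 ^ μ` for some infinite `μ`, they can be taken almost discrete and
extremally disconnected. -/
theorem stmt11 (κ lam : Cardinal) (hκ : ℵ₀ ≤ κ) (h1 : κ ≤ lam) (h2 : lam ≤ 2 ^ κ) :
    ExistsNonHomeoFamily (2 ^ lam) (fun X t =>
      letI := t
      Scattered X ∧ StronglyZeroDimensional X ∧ HereditarilyParacompact X ∧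
        PerfectlyNormal X ∧ #X = κ ∧ tweight X = lam)
    ∧ ((∃ μ : Cardinal, ℵ₀ ≤ μ ∧ lam ≤ 2 ^ μ ∧ (2 : Cardinal) ^ μ < 2 ^ lam) →
      ExistsNonHomeoFamily (2 ^ lam) (fun X t =>
        letI := t
        Scattered X ∧ StronglyZeroDimensional X ∧ HereditarilyParacompact X ∧
          PerfectlyNormal X ∧ #X = κ ∧ tweight X = lam ∧ AlmostDiscrete X))
    ∧ ((∃ μ : Cardinal, ℵ₀ ≤ μ ∧ lam = 2 ^ μ) →
      ExistsNonHomeoFamily (2 ^ lam) (fun X t =>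
        letI := t
        Scattered X ∧ StronglyZeroDimensional X ∧ HereditarilyParacompact X ∧
          PerfectlyNormal X ∧ #X = κ ∧ tweight X = lam ∧ AlmostDiscrete X ∧
          ExtremallyDisconnected X)) := by
  refine ⟨?_, ?_, ?_⟩
  · rcases (Cardinal.power_le_power_left two_ne_zero h1).lt_or_eq with hlt | heq
    · refine (part2 κ lam hκ h1 κ hκ le_rfl h2 hlt).mono ?_
      rintro X t ⟨p1, p2, p3, p4, p5, p6, -⟩
      exact ⟨p1, p2, p3, p4, p5, p6⟩
    · exact part1 κ lam hκ h1 h2 heq.symm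
  · rintro ⟨μ, hμ, hl, hlt⟩
    have key : ∃ ν : Cardinal.{0}, ℵ₀ ≤ ν ∧ ν ≤ κ ∧ lam ≤ 2 ^ ν ∧ (2 : Cardinal) ^ ν < 2 ^ lam := by
      rcases le_total μ κ with h | h
      · exact ⟨μ, hμ, h, hl, hlt⟩
      · exact ⟨κ, hκ, le_rfl, h2, (Cardinal.power_le_power_left two_ne_zero h).trans_lt hlt⟩
    obtain ⟨ν, g1, g2, g3, g4⟩ := key
    refine (part2 κ lam hκ h1 ν g1 g2 g3 g4).mono ?_
    rintro X t ⟨p1, p2, p3, p4, p5, p6, p7, -⟩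
    exact ⟨p1, p2, p3, p4, p5, p6, p7⟩
  · rintro ⟨μ, hμ, hl⟩
    rcases le_total μ κ with h | h
    · exact part3 κ lam hκ h1 μ hμ h hl
    · refine part3 κ lam hκ h1 κ hκ le_rfl (le_antisymm h2 ?_)
      rw [hl]
      exact Cardinal.power_le_power_left two_ne_zero h
end

section
/- Let κ and λ be cardinals with 𝔠 ≤ κ ≤ λ ≤ 2^κ, where 𝔠 = 2^{ℵ₀}. Then there exist 2^λ mutually non-homeomorphic pathwise connected, locally pathwise connected, almost metrizable topological spaces of cardinality κ and weight λ. -/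
open Cardinal Set Topology

namespace Stmt12

/-- independent family -/
lemma exists_indep (O Λ : Type) [Infinite O] (hΛ : #Λ ≤ 2 ^ #O) :
    ∃ (B : Λ → Set O) (c : O → ℕ), ∀ (Φ : Finset Λ) (T : Set Λ) (k : ℕ),
      ∃ o, k ≤ c o ∧ ∀ i ∈ Φ, (o ∈ B i ↔ i ∈ T) := by
  classical
  have h1 : #Λ ≤ #(Set O) := by rwa [Cardinal.mk_set]
  obtain ⟨f⟩ := h1
  have h2 : #O = #(Finset O × Finset (Finset O) × ℕ) := by
    have := Cardinal.aleph0_le_mk O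
    simp only [Cardinal.mk_prod, Cardinal.lift_id, Cardinal.mk_finset_of_infinite, Cardinal.mk_nat]
    simp [Cardinal.mul_eq_max_of_aleph0_le_left, this]
  obtain ⟨e⟩ := Cardinal.eq.1 h2
  refine ⟨fun i => {o | (e o).1.filter (· ∈ f i) ∈ (e o).2.1}, fun o => (e o).2.2, ?_⟩
  intro Φ T k
  -- separating points
  have hsep : ∀ i j : Λ, ∃ x : O, i ≠ j → ¬ (x ∈ f i ↔ x ∈ f j) := by
    intro i j
    by_cases h : i = j
    · exact ⟨Classical.arbitrary O, fun h' => absurd h h'⟩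
    · have : f i ≠ f j := fun h' => h (f.injective h')
      by_contra hcon
      push Not at hcon
      exact this (Set.ext fun x => (hcon x).2)
  choose g hg using hsep
  let a : Finset O := (Φ ×ˢ Φ).image (fun p => g p.1 p.2)
  let A : Finset (Finset O) := (Φ.filter (· ∈ T)).image (fun i => a.filter (· ∈ f i))
  refine ⟨e.symm (a, A, k), by simp, ?_⟩
  intro i hi
  simp only [mem_ofPred_eq, Equiv.apply_symm_apply]
  constructor
  · intro h
    obtain ⟨j, hj, hij⟩ := Finset.mem_image.1 h
    rw [Finset.mem_filter] at hj
    by_cases hne : i = j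
    · rw [hne]; exact hj.2
    · exfalso
      apply hg i j hne
      have hm : g i j ∈ a := Finset.mem_image.2 ⟨(i, j), by simp [hi, hj.1], rfl⟩
      have := Finset.ext_iff.1 hij (g i j)
      simp only [Finset.mem_filter, hm, true_and] at this
      exact this.symm
  · intro h
    exact Finset.mem_image.2 ⟨i, by simp [hi, h], rfl⟩

lemma exists_embed (O : Type) (κ : Cardinal.{0}) (hO : #O = κ) (hκ : Cardinal.continuum ≤ κ) :
    ∃ (E : Type) (_ : NormedAddCommGroup E) (_ : NormedSpace ℝ E) (v : List (ℕ × O) → E),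
      #E ≤ κ ∧ 1 < Module.rank ℝ (E × ℝ) ∧
      (∀ s, ∃ ε > 0, ∀ t, ‖v t - v s‖ < ε → s <:+ t) ∧
      (∀ s n b, ‖v ((n, b) :: s) - v s‖ ≤ 1 / ((n : ℝ) + 1)) := by
  classical
  let I := List (ℕ × O)
  let : TopologicalSpace I := ⊥
  have : DiscreteTopology I := ⟨rfl⟩
  let w : I → ℝ := fun p => match p with
    | [] => 1
    | (a :: _) => 1 / ((a.1 : ℝ) + 1)
  have hw0 : ∀ p, 0 < w p := by
    intro p; cases p with
    | nil => simp [w]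
    | cons a l => simp only [w]; positivity
  have hw1 : ∀ p, w p ≤ 1 := by
    intro p; cases p with
    | nil => simp [w]
    | cons a l => simp only [w]; rw [div_le_one (by positivity)]; simp
  let u : I → BoundedContinuousFunction I ℝ := fun s =>
    BoundedContinuousFunction.ofNormedAddCommGroupDiscrete (fun p => if p <:+ s then w p else 0) 1
      (by intro p; split_ifs
          · rw [Real.norm_of_nonneg (hw0 p).le]; exact hw1 p
          · simp)
  have hu : ∀ s p, u s p = if p <:+ s then w p else 0 := fun s p => rfl
  let E := Submodule.span ℝ (Set.range u)
  let v : I → E := fun s => ⟨u s, Submodule.subset_span ⟨s, rfl⟩⟩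
  have hvn : ∀ s t, ‖v s - v t‖ = ‖u s - u t‖ := fun s t => rfl
  refine ⟨E, inferInstance, inferInstance, v, ?_, ?_, ?_, ?_⟩
  · -- cardinality
    have hκ0 : ℵ₀ ≤ κ := Cardinal.aleph0_le_continuum.trans hκ
    have : Infinite O := Cardinal.infinite_iff.2 (hO ▸ hκ0)
    have hI : #I = κ := by
      simp only [I]
      rw [Cardinal.mk_list_eq_mk]
      simp [hO, hκ0]
    have hs : Function.Surjective (Set.rangeFactorization (Finsupp.linearCombination ℝ u)) :=
      Set.rangeFactorization_surjective
    have h1 : #(Set.range (Finsupp.linearCombination ℝ u)) ≤ #(I →₀ ℝ) := Cardinal.mk_range_le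
    have h2 : (E : Set (BoundedContinuousFunction I ℝ)) = Set.range (Finsupp.linearCombination ℝ u) := by
      rw [← LinearMap.coe_range, Finsupp.range_linearCombination]
    have h3 : #E = #(Set.range (Finsupp.linearCombination ℝ u)) := by
      rw [← h2]; rfl
    rw [h3]
    refine h1.trans ?_
    rw [Cardinal.mk_finsupp_of_infinite, hI, Cardinal.mk_real]
    exact max_le le_rfl hκ
  · have hne : v [] ≠ 0 := by
      intro h
      have h' : u [] = 0 := congrArg Subtype.val h
      have := hu [] []
      rw [h'] at this
      simp [w] at this
    have : Nontrivial E := ⟨⟨v [], 0, hne⟩⟩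
    rw [rank_prod', Module.rank_self]
    have : 0 < Module.rank ℝ E := rank_pos (R := ℝ) (M := E)
    have h1 : 1 ≤ Module.rank ℝ E := Cardinal.one_le_iff_pos.2 this
    calc (1 : Cardinal) < 1 + 1 := by norm_num
      _ ≤ _ := by gcongr
  · intro s
    refine ⟨w s, hw0 s, fun t ht => ?_⟩
    by_contra hst
    have h1 := (u t - u s).norm_coe_le_norm s
    rw [hvn] at ht
    have h2 : (u t - u s) s = - w s := by
      rw [BoundedContinuousFunction.sub_apply, hu, hu]; simp [hst]
    rw [h2, norm_neg, Real.norm_of_nonneg (hw0 s).le] at h1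
    linarith
  · intro s n b
    rw [hvn, BoundedContinuousFunction.norm_le (by positivity)]
    intro p
    rw [BoundedContinuousFunction.sub_apply, hu, hu]
    by_cases h1 : p <:+ s
    · have h2 : p <:+ (n, b) :: s := h1.trans (List.suffix_cons _ _)
      simp [h1, h2]; positivity
    · by_cases h2 : p = (n, b) :: s
      · subst h2
        rw [if_pos (List.suffix_refl _), if_neg h1, sub_zero]
        exact (Real.norm_of_nonneg (hw0 ((n, b) :: s)).le).le
      · have h3 : ¬ p <:+ (n, b) :: s := by
          rw [List.suffix_cons_iff]; tauto
        rw [if_neg h3, if_neg h1]; simp; positivity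

end Stmt12


namespace Stmt12

section generic
variable (X : Type) [TopologicalSpace X]

def Bad : Set X := {x | ¬ ∀ U ∈ 𝓝 x, ∃ V ∈ 𝓝 x, V ⊆ U ∧ IsPreconnected (V \ {x})}

noncomputable def DD {O : Type} [LinearOrder O] [WellFoundedLT O] (β : O) : Set X :=
  (wellFounded_lt (α := O)).fix (C := fun _ => Set X) (fun β rec =>
    {x | x ∈ closure (Bad X) ∧ ∀ γ, (h : γ < β) → x ∈ closure (rec γ h \ {x})}) β

variable {X}

lemma mem_DD {O : Type} [LinearOrder O] [WellFoundedLT O] (β : O) (x : X) :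
    x ∈ DD X β ↔ x ∈ closure (Bad X) ∧ ∀ γ < β, x ∈ closure (DD X γ \ {x}) := by
  rw [DD, WellFounded.fix_eq]; rfl

lemma bad_homeo (e : X ≃ₜ X) {x : X} (h : e x ∈ Bad X) : x ∈ Bad X := by
  intro hx
  apply h
  intro U hU
  obtain ⟨V, hV, hVU, hc⟩ := hx (e ⁻¹' U) (e.continuous.continuousAt hU)
  refine ⟨e '' V, ?_, by simpa using hVU, ?_⟩
  · rw [← e.map_nhds_eq]; exact Filter.image_mem_map hV
  · have := hc.image e e.continuous.continuousOn
    rwa [Set.image_sdiff e.injective, Set.image_singleton] at this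

lemma bad_homeo_eq (e : X ≃ₜ X) : e ⁻¹' (Bad X) = Bad X := by
  ext x
  refine ⟨bad_homeo e, fun h => bad_homeo e.symm (by simpa using h)⟩

lemma DD_homeo_eq {O : Type} [LinearOrder O] [WellFoundedLT O] (e : X ≃ₜ X) (β : O) :
    e ⁻¹' (DD X β) = DD X β := by
  induction β using WellFoundedLT.induction with
  | ind β ih =>
    ext x
    rw [mem_preimage, mem_DD, mem_DD]
    have h1 : ∀ S : Set X, e x ∈ closure S ↔ x ∈ closure (e ⁻¹' S) := by
      intro S; rw [← e.preimage_closure]; rfl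
    rw [h1, bad_homeo_eq]
    refine and_congr Iff.rfl (forall₂_congr fun γ hγ => ?_)
    rw [h1, preimage_sdiff, ih γ hγ]
    have : e ⁻¹' {e x} = {x} := by ext y; simp
    rw [this]

end generic

section
variable {O : Type} [LinearOrder O]

def rk (α : O) : List (ℕ × O) → O
  | [] => α
  | a :: _ => a.2

def Valid (α : O) : List (ℕ × O) → Prop
  | [] => True
  | a :: s => a.2 < rk α s ∧ Valid α s

lemma rk_lt {α : O} {s t : List (ℕ × O)} (h : s <:+ t) (ht : Valid α t) (hne : s ≠ t) :
    rk α t < rk α s := by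
  induction t with
  | nil => simp at h; exact absurd h hne
  | cons a t ih =>
    rcases List.suffix_cons_iff.1 h with h | h
    · exact absurd h hne
    · by_cases hs : s = t
      · subst hs; exact ht.1
      · exact ht.1.trans (ih h ht.2 hs)

variable {E : Type} [NormedAddCommGroup E] [NormedSpace ℝ E] 

abbrev YT (v : List (ℕ × O) → E) : Type :=
  {y : O × E × ℝ // y.2.2 ≠ 0 ∨ ∃ s, Valid y.1 s ∧ v s = y.2.1}

variable (v : List (ℕ × O) → E)

def pt (α : O) (s : List (ℕ × O)) (h : Valid α s) : YT v := ⟨(α, v s, 0), Or.inr ⟨s, h, rfl⟩⟩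

def root (α : O) : YT v := pt v α [] trivial

variable {v}

/-- cylinder -/
def cyl (v : List (ℕ × O) → E) (α : O) (S : Set (E × ℝ)) : Set (YT v) :=
  {z | z.1.1 = α ∧ z.1.2 ∈ S}

variable [TopologicalSpace O] [DiscreteTopology O]

lemma cont_idx : Continuous (fun y : YT v => y.1.1) := continuous_fst.comp continuous_subtype_val
lemma cont_t : Continuous (fun y : YT v => y.1.2.2) :=
  continuous_snd.comp (continuous_snd.comp continuous_subtype_val)

lemma nhds_basis (y : YT v) :
    (𝓝 y).HasBasis (fun ε : ℝ => 0 < ε) (fun ε => cyl v y.1.1 (Metric.ball y.1.2 ε)) := by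
  have h1 : 𝓝 y = Filter.comap Subtype.val (pure y.1.1 ×ˢ 𝓝 y.1.2) := by
    rw [nhds_subtype_eq_comap, ← nhds_discrete, ← nhds_prod_eq]
  rw [h1]
  have := (((Filter.hasBasis_pure y.1.1).prod (Metric.nhds_basis_ball (x := y.1.2))).comap
    (Subtype.val : YT v → _))
  refine ⟨fun t => ?_⟩
  rw [this.mem_iff]
  constructor
  · rintro ⟨i, ⟨_, hi⟩, h⟩
    refine ⟨i.2, hi, fun z hz => h ?_⟩
    exact ⟨hz.1, hz.2⟩
  · rintro ⟨ε, hε, h⟩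
    refine ⟨((), ε), ⟨trivial, hε⟩, fun z hz => h ?_⟩
    exact ⟨hz.1, hz.2⟩

lemma seg (y z : YT v) (hi : y.1.1 = z.1.1) (hy : y.1.2.2 ≠ 0) (hyz : 0 ≤ y.1.2.2 * z.1.2.2)
    {S : Set (E × ℝ)} (hS : Convex ℝ S) (hyS : y.1.2 ∈ S) (hzS : z.1.2 ∈ S) :
    JoinedIn (cyl v y.1.1 S) y z := by
  have key : ∀ s : unitInterval, 
      let q : E × ℝ := (1 - (s : ℝ)) • y.1.2 + (s : ℝ) • z.1.2
      q.2 ≠ 0 ∨ ∃ l, Valid y.1.1 l ∧ v l = q.1 := by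
    intro s q
    by_cases hs : (s : ℝ) = 1
    · have : q = z.1.2 := by simp [q, hs]
      rw [this, hi]
      exact z.2
    · left
      have hs1 : (s : ℝ) < 1 := lt_of_le_of_ne s.2.2 hs
      have hs0 : 0 ≤ (s : ℝ) := s.2.1
      have h2 : q.2 = (1 - (s : ℝ)) * y.1.2.2 + s * z.1.2.2 := by simp [q]
      intro h0
      rw [h2] at h0
      have h3 : 0 < (1 - (s:ℝ)) * (y.1.2.2 * y.1.2.2) := by
        apply mul_pos (by linarith)
        exact mul_self_pos.2 hy
      have h4 : 0 ≤ (s : ℝ) * (y.1.2.2 * z.1.2.2) := mul_nonneg hs0 hyz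
      have h5 : y.1.2.2 * ((1 - (s : ℝ)) * y.1.2.2 + s * z.1.2.2) = 0 := by rw [h0, mul_zero]
      nlinarith
  refine ⟨⟨⟨fun s => ⟨(y.1.1, (1 - (s : ℝ)) • y.1.2 + (s : ℝ) • z.1.2), key s⟩, ?_⟩, ?_, ?_⟩, ?_⟩
  · apply Continuous.subtype_mk
    fun_prop
  · apply Subtype.ext; simp
  · apply Subtype.ext; simp [hi]
  · intro s
    exact ⟨rfl, hS hyS hzS (by linarith [s.2.2]) s.2.1 (by ring)⟩

/-- local path connectedness -/
lemma joined_ball (y : YT v) {ε : ℝ} (hε : 0 < ε) (h : y.1.2.2 = 0 ∨ ε ≤ |y.1.2.2|)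
    (z : YT v) (hz : z ∈ cyl v y.1.1 (Metric.ball y.1.2 ε)) :
    JoinedIn (cyl v y.1.1 (Metric.ball y.1.2 ε)) z y := by
  obtain ⟨hi, hz2⟩ := hz
  have hyb : y.1.2 ∈ Metric.ball y.1.2 ε := Metric.mem_ball_self hε
  by_cases hz0 : z.1.2.2 = 0
  · rcases h with h | h
    · -- move up
      have hd : z.1.2 = (z.1.2.1, 0) := by ext <;> simp [hz0]
      let w : YT v := ⟨(z.1.1, z.1.2.1, ε / 2), Or.inl (by simp; positivity)⟩
      have hw : w.1.2 ∈ Metric.ball y.1.2 ε := by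
        rw [Metric.mem_ball, Prod.dist_eq] at hz2 ⊢
        rw [max_lt_iff] at hz2 ⊢
        refine ⟨hz2.1, ?_⟩
        simp only [w, h, Real.dist_eq, sub_zero]
        rw [abs_of_pos (by positivity)]; linarith
      have hwt : w.1.2.2 ≠ 0 := by simp [w]; positivity
      have h1 := seg w z rfl hwt (by rw [hz0]; simp) (convex_ball y.1.2 ε) hw hz2
      have h2 := seg w y (by exact hi) hwt (by rw [h]; simp) (convex_ball y.1.2 ε) hw hyb
      have hw1 : w.1.1 = y.1.1 := hi
      rw [hw1] at h1 h2
      exact h1.symm.trans h2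
    · exfalso
      rw [Metric.mem_ball, Prod.dist_eq, max_lt_iff] at hz2
      have := hz2.2
      rw [Real.dist_eq, hz0, zero_sub, abs_neg] at this
      linarith
  · have : 0 ≤ z.1.2.2 * y.1.2.2 := by
      rcases h with h | h
      · rw [h]; simp
      · rw [Metric.mem_ball, Prod.dist_eq, max_lt_iff] at hz2
        have h2 := hz2.2
        rw [Real.dist_eq] at h2
        have h3 := h2.trans_le h
        have h4 := sq_lt_sq.2 h3
        nlinarith [sq_nonneg z.1.2.2]
    have h1 := seg z y hi hz0 this (convex_ball y.1.2 ε) hz2 hyb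
    rwa [hi] at h1

lemma joined_root (y : YT v) : JoinedIn (cyl v y.1.1 univ) y (root v y.1.1) := by
  by_cases hy : y.1.2.2 = 0
  · let w : YT v := ⟨(y.1.1, y.1.2.1, 1), Or.inl (by simp)⟩
    have hwt : w.1.2.2 ≠ 0 := by simp [w]
    have h1 := seg w y rfl hwt (by rw [hy]; simp) convex_univ (mem_univ _) (mem_univ _)
    have h2 := seg w (root v y.1.1) rfl hwt (by simp [root, pt]) convex_univ (mem_univ _) (mem_univ _)
    exact h1.symm.trans h2
  · exact seg y (root v y.1.1) rfl hy (by simp [root, pt]) convex_univ (mem_univ _) (mem_univ _)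

lemma idx_const (g : YT v ≃ₜ YT v) {y z : YT v} (h : y.1.1 = z.1.1) : (g y).1.1 = (g z).1.1 := by
  have h1 : IsPathConnected (cyl v y.1.1 univ) := by
    refine ⟨root v y.1.1, ⟨rfl, trivial⟩, ?_⟩
    rintro w ⟨hw, _⟩
    have := joined_root w
    rw [hw] at this
    exact this.symm
  exact h1.isConnected.isPreconnected.constant
    (f := fun w => (g w).1.1) ((cont_idx.comp g.continuous).continuousOn) ⟨rfl, trivial⟩ ⟨h.symm, trivial⟩

lemma ball_diff {F : Type} [NormedAddCommGroup F] [NormedSpace ℝ F] (h : 1 < Module.rank ℝ F)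
    (x : F) {r : ℝ} (hr : 0 < r) : IsPreconnected (Metric.ball x r \ {x}) := by
  have h1 := (isConnected_compl_singleton_of_one_lt_rank h (0 : F)).isPreconnected
  have hc : Continuous (fun y : F => x + (r / (1 + ‖y‖)) • y) := by
    have : ∀ y : F, 1 + ‖y‖ ≠ 0 := fun y => by positivity
    fun_prop (disch := assumption)
  convert h1.image _ hc.continuousOn using 1
  ext z
  constructor
  · rintro ⟨hz, hne⟩
    rw [mem_ball_iff_norm] at hz
    have hp : 0 < r - ‖z - x‖ := by linarith
    have hzx : z - x ≠ 0 := sub_ne_zero.2 hne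
    refine ⟨(r - ‖z - x‖)⁻¹ • (z - x), ?_, ?_⟩
    · simp only [mem_compl_iff, mem_singleton_iff, smul_eq_zero, inv_eq_zero, not_or]
      exact ⟨hp.ne', hzx⟩
    · simp only [norm_smul, norm_inv, Real.norm_of_nonneg hp.le, smul_smul]
      have : r / (1 + (r - ‖z - x‖)⁻¹ * ‖z - x‖) * (r - ‖z - x‖)⁻¹ = 1 := by
        have : 1 + (r - ‖z - x‖)⁻¹ * ‖z - x‖ = r * (r - ‖z - x‖)⁻¹ := by
          field_simp; ring
        rw [this]; field_simp
      rw [this]; simp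
  · rintro ⟨y, hy, rfl⟩
    have hy0 : 0 < ‖y‖ := norm_pos_iff.2 hy
    refine ⟨?_, ?_⟩
    · rw [mem_ball_iff_norm]
      simp only [add_sub_cancel_left, norm_smul, norm_div, Real.norm_of_nonneg hr.le]
      rw [Real.norm_of_nonneg (by positivity), div_mul_eq_mul_div, div_lt_iff₀ (by positivity)]
      nlinarith
    · intro h
      have h' : x + (r / (1 + ‖y‖)) • y = x := h
      replace h' := smul_eq_zero.1 (add_left_cancel (h'.trans (add_zero x).symm))
      rcases h' with h' | h'
      · have : 0 < r / (1 + ‖y‖) := by positivity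
        exact this.ne' h'
      · exact hy h'

lemma bad_zero (hr : 1 < Module.rank ℝ (E × ℝ)) {y : YT v} (h : y ∈ Bad (YT v)) : y.1.2.2 = 0 := by
  by_contra hy
  apply h
  intro U hU
  obtain ⟨ε, hε, hεU⟩ := (nhds_basis y).mem_iff.1 hU
  have hd : 0 < min ε |y.1.2.2| := lt_min hε (abs_pos.2 hy)
  refine ⟨_, (nhds_basis y).mem_of_mem hd, ?_, ?_⟩
  · refine Subset.trans ?_ hεU
    rintro z ⟨h1, h2⟩
    exact ⟨h1, Metric.ball_subset_ball (min_le_left _ _) h2⟩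
  · refine (IsInducing.isPreconnected_image (f := (Subtype.val : YT v → _)) ⟨rfl⟩).1 ?_
    have := (isPreconnected_singleton (x := y.1.1)).prod (ball_diff hr y.1.2 hd)
    convert this using 1
    ext ⟨a, p⟩
    constructor
    · rintro ⟨z, ⟨⟨h1, h2⟩, h3⟩, hz⟩
      rw [← hz]
      refine ⟨h1, h2, fun h4 => h3 ?_⟩
      exact Subtype.ext (Prod.ext h1 h4)
    · rintro ⟨h1, h2, h3⟩
      have hp : p.2 ≠ 0 := by
        intro hp
        rw [Metric.mem_ball, Prod.dist_eq, max_lt_iff] at h2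
        have h4 := h2.2.trans_le (min_le_right _ _)
        rw [Real.dist_eq] at h4
        simp [hp] at h4
      refine ⟨⟨(a, p), Or.inl hp⟩, ⟨⟨h1, h2⟩, ?_⟩, rfl⟩
      intro h4
      apply h3
      have := congrArg (fun z : YT v => z.1.2) h4
      exact this

lemma closure_bad_zero (hr : 1 < Module.rank ℝ (E × ℝ)) {y : YT v} (h : y ∈ closure (Bad (YT v))) :
    y.1.2.2 = 0 := by
  have hc : IsClosed {y : YT v | y.1.2.2 = 0} := isClosed_eq cont_t continuous_const
  exact hc.closure_subset_iff.2 (fun z hz => bad_zero hr hz) h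

lemma isol_bad (hP1 : ∀ s, ∃ ε > 0, ∀ t, ‖v t - v s‖ < ε → s <:+ t) {α : O} {s : List (ℕ × O)}
    (hs : Valid α s) (hmin : ∀ b, ¬ b < rk α s) : pt v α s hs ∈ Bad (YT v) := by
  intro hbad
  obtain ⟨ε, hε, h1⟩ := hP1 s
  obtain ⟨V, hV, hVU, hc⟩ := hbad _ ((nhds_basis (pt v α s hs)).mem_of_mem hε)
  obtain ⟨δ, hδ, hδV⟩ := (nhds_basis _).mem_iff.1 hV
  have hmem : ∀ c : ℝ, (hc0 : c ≠ 0) → |c| < δ → (⟨(α, v s, c), Or.inl hc0⟩ : YT v) ∈ V \ {pt v α s hs} := by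
    intro c hc0 hcd
    refine ⟨hδV ⟨rfl, ?_⟩, ?_⟩
    · rw [Metric.mem_ball, Prod.dist_eq, max_lt_iff]
      simp [pt, hδ, hcd]
    · intro h
      exact hc0 (congrArg (fun z : YT v => z.1.2.2) h)
  have hp := hmem (δ / 2) (by positivity) (by rw [abs_of_pos (by positivity)]; linarith)
  have hn := hmem (-(δ / 2)) (by simp; positivity) (by rw [abs_neg, abs_of_pos (by positivity)]; linarith)
  have himg := hc.image (fun y : YT v => y.1.2.2) cont_t.continuousOn
  have h0 : (0 : ℝ) ∈ (fun y : YT v => y.1.2.2) '' (V \ {pt v α s hs}) := by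
    apply himg.Icc_subset ⟨_, hn, rfl⟩ ⟨_, hp, rfl⟩
    constructor <;> simp <;> positivity
  obtain ⟨z, ⟨hzV, hzne⟩, hz0⟩ := h0
  obtain ⟨hz1, hz2⟩ := hVU hzV
  have hz0' : z.1.2.2 = 0 := hz0
  rcases z.2 with h | ⟨t, ht, htv⟩
  · exact h hz0'
  · rw [Metric.mem_ball, Prod.dist_eq, max_lt_iff] at hz2
    have h3 := hz2.1
    rw [← htv, dist_eq_norm] at h3
    have h4 := h1 t h3
    have hz1' : z.1.1 = α := hz1
    rw [hz1'] at ht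
    by_cases hst : s = t
    · apply hzne
      apply Subtype.ext
      refine Prod.ext hz1' (Prod.ext ?_ hz0')
      rw [← htv, ← hst]; rfl
    · exact hmin _ (rk_lt h4 ht hst)

lemma near (hP2 : ∀ s n b, ‖v ((n, b) :: s) - v s‖ ≤ 1 / ((n : ℝ) + 1)) {α : O} {s : List (ℕ × O)}
    (hs : Valid α s) {b : O} (hb : b < rk α s) {S : Set (YT v)}
    (hS : ∀ n, pt v α ((n, b) :: s) ⟨hb, hs⟩ ∈ S) : pt v α s hs ∈ closure S := by
  rw [mem_closure_iff_nhds_basis (nhds_basis _)]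
  intro ε hε
  obtain ⟨n, hn⟩ := exists_nat_one_div_lt hε
  refine ⟨_, hS n, rfl, ?_⟩
  rw [Metric.mem_ball, Prod.dist_eq, max_lt_iff]
  refine ⟨?_, by simpa [pt] using hε⟩
  rw [dist_eq_norm]
  exact (hP2 s n b).trans_lt hn

lemma DD_char [WellFoundedLT O] (hr : 1 < Module.rank ℝ (E × ℝ))
    (hP1 : ∀ s, ∃ ε > 0, ∀ t, ‖v t - v s‖ < ε → s <:+ t)
    (hP2 : ∀ s n b, ‖v ((n, b) :: s) - v s‖ ≤ 1 / ((n : ℝ) + 1)) (β : O) :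
    ∀ y : YT v, y ∈ DD (YT v) β ↔ ∃ s, ∃ h : Valid y.1.1 s, y = pt v y.1.1 s h ∧ β ≤ rk y.1.1 s := by
  induction β using WellFoundedLT.induction with
  | ind β ih =>
  intro y
  rw [mem_DD]
  constructor
  · rintro ⟨h1, h2⟩
    have h0 := closure_bad_zero hr h1
    rcases y.2 with h | ⟨s, hs, hsv⟩
    · exact absurd h0 h
    refine ⟨s, hs, ?_, ?_⟩
    · exact Subtype.ext (Prod.ext rfl (Prod.ext hsv.symm h0))
    · by_contra hlt
      push Not at hlt
      obtain ⟨ε, hε, h3⟩ := hP1 s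
      obtain ⟨z, ⟨hzD, hzne⟩, hz1, hz2⟩ := (mem_closure_iff_nhds_basis (nhds_basis y)).1 (h2 _ hlt) ε hε
      obtain ⟨t, ht, hzt, hrk⟩ := (ih _ hlt z).1 hzD
      have hzv : z.1.2 = (v t, 0) := congrArg (fun z : YT v => z.1.2) hzt
      rw [Metric.mem_ball, Prod.dist_eq, max_lt_iff] at hz2
      have h4 := hz2.1
      rw [hzv, ← hsv, dist_eq_norm] at h4
      have h5 := h3 t h4
      rw [hz1] at ht hrk
      by_cases hst : s = t
      · apply hzne
        apply Subtype.ext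
        refine Prod.ext hz1 ?_
        rw [hzv]
        exact Prod.ext (by rw [← hst, hsv]) h0.symm
      · exact absurd hrk (not_le.2 (rk_lt h5 ht hst))
  · rintro ⟨s, hs, hy, hle⟩
    obtain ⟨b, -, hb⟩ : ∃ b : O, b ∈ (univ : Set O) ∧ ∀ c ∈ (univ : Set O), ¬ c < b :=
      WellFounded.has_min (wellFounded_lt) univ ⟨β, trivial⟩
    constructor
    · rw [hy]
      by_cases hmin : ∀ c, ¬ c < rk y.1.1 s
      · exact subset_closure (isol_bad hP1 hs hmin)
      · push Not at hmin
        obtain ⟨c, hc⟩ := hmin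
        have hbs : b < rk y.1.1 s := (not_lt.1 (hb c trivial)).trans_lt hc
        exact near hP2 hs hbs (fun n => isol_bad hP1 _ (fun c => hb c trivial))
    · intro γ hγ
      have := near (v := v) hP2 hs (hγ.trans_le hle) (S := DD (YT v) γ \ {y}) ?_
      · rwa [← hy] at this
      · intro n
        refine ⟨(ih γ hγ _).2 ⟨(n, γ) :: s,
          show Valid y.1.1 ((n, γ) :: s) from ⟨hγ.trans_le hle, hs⟩, rfl, le_rfl⟩, ?_⟩
        intro heq
        have h6 : v ((n, γ) :: s) = v s :=
          (congrArg (fun z : YT v => z.1.2.1) (mem_singleton_iff.1 heq)).trans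
            (congrArg (fun z : YT v => z.1.2.1) hy)
        obtain ⟨ε, hε, h3⟩ := hP1 ((n, γ) :: s)
        have := (h3 s (by rw [h6]; simpa using hε)).length_le
        simp at this

lemma fix_root [WellFoundedLT O] (hr : 1 < Module.rank ℝ (E × ℝ))
    (hP1 : ∀ s, ∃ ε > 0, ∀ t, ‖v t - v s‖ < ε → s <:+ t)
    (hP2 : ∀ s n b, ‖v ((n, b) :: s) - v s‖ ≤ 1 / ((n : ℝ) + 1)) (g : YT v ≃ₜ YT v) (o : O) :
    g (root v o) = root v o := by
  have hroot : ∀ o : O, root v o ∈ DD (YT v) o := fun o =>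
    (DD_char hr hP1 hP2 o _).2 ⟨[], trivial, rfl, le_rfl⟩
  have hrkle : ∀ (α : O) (s) (h : Valid α s), rk α s ≤ α := by
    intro α s h
    by_cases hs : s = []
    · subst hs; exact le_rfl
    · exact (rk_lt (List.nil_suffix) h (Ne.symm hs)).le
  have h1 : ∀ (g : YT v ≃ₜ YT v) (o : O), g (root v o) ∈ DD (YT v) o := by
    intro g o
    have := DD_homeo_eq g o
    rw [← mem_preimage, this]
    exact hroot o
  obtain ⟨s, hs, heq, hle⟩ := (DD_char hr hP1 hP2 o _).1 (h1 g o)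
  set β := (g (root v o)).1.1 with hβ
  obtain ⟨s', hs', heq', hle'⟩ := (DD_char hr hP1 hP2 β _).1 (h1 g.symm β)
  have hidx : (g.symm (root v β)).1.1 = o := by
    have := idx_const g.symm (y := root v β) (z := g (root v o)) rfl
    rw [this]; simp; rfl
  rw [hidx] at hs' hle'
  have hβo : β = o := le_antisymm (hle'.trans (hrkle _ _ hs')) (hle.trans (hrkle _ _ hs))
  have hsn : s = [] := by
    by_contra hne
    have := rk_lt (List.nil_suffix) hs (Ne.symm hne)
    have h3 : rk β [] = β := rfl
    rw [h3, hβo] at this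
    rw [hβo] at hle
    exact absurd hle (not_le.2 this)
  rw [heq]
  subst hsn
  apply Subtype.ext
  exact Prod.ext hβo rfl

end
end Stmt12


namespace Stmt12

section ext
variable {Y : Type} [TopologicalSpace Y]

def Ext (_F : Filter Y) : Type := Option Y

variable (F : Filter Y)

def inft : Ext F := (none : Option Y)
def inc (y : Y) : Ext F := (some y : Option Y)

instance : TopologicalSpace (Ext F) where
  IsOpen W := IsOpen (inc F ⁻¹' W) ∧ (inft F ∈ W → inc F ⁻¹' W ∈ F)
  isOpen_univ := by simp
  isOpen_inter s t hs ht := by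
    refine ⟨hs.1.inter ht.1, fun h => Filter.inter_mem (hs.2 h.1) (ht.2 h.2)⟩
  isOpen_sUnion S hS := by
    refine ⟨?_, ?_⟩
    · rw [preimage_sUnion]
      exact isOpen_biUnion fun t ht => (hS t ht).1
    · rintro ⟨t, ht, h⟩
      exact Filter.mem_of_superset ((hS t ht).2 h) (preimage_mono (subset_sUnion_of_mem ht))

variable {F}

lemma ext_cases (x : Ext F) : x = inft F ∨ ∃ y, x = inc F y := by
  cases x using Option.casesOn with
  | none => exact Or.inl rfl
  | some y => exact Or.inr ⟨y, rfl⟩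

lemma inc_inj : Function.Injective (inc F) := fun _ _ h => Option.some_injective _ h

lemma inc_ne (y : Y) : inc F y ≠ inft F := fun h => Option.some_ne_none y h

lemma ext_isOpen {W : Set (Ext F)} :
    IsOpen W ↔ IsOpen (inc F ⁻¹' W) ∧ (inft F ∈ W → inc F ⁻¹' W ∈ F) := Iff.rfl

lemma inft_notMem (U : Set Y) : inft F ∉ inc F '' U := by
  rintro ⟨y, _, h⟩; exact inc_ne y h

lemma inc_openEmb : IsOpenEmbedding (inc F) := by
  refine .of_continuous_injective_isOpenMap ⟨fun s hs => hs.1⟩ inc_inj ?_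
  intro U hU
  refine ⟨by rwa [preimage_image_eq _ inc_inj], fun h => absurd h (inft_notMem U)⟩

/-- add the point -/
def plus (F : Filter Y) (V : Set Y) : Set (Ext F) := insert (inft F) (inc F '' V)

lemma plus_pre (V : Set Y) : inc F ⁻¹' (plus F V) = V := by
  ext y
  constructor
  · rintro (h | ⟨z, hz, h⟩)
    · exact absurd h (inc_ne y)
    · rwa [← inc_inj h]
  · intro h; exact Or.inr ⟨y, h, rfl⟩

lemma inc_mem_plus {V : Set Y} {y : Y} : inc F y ∈ plus F V ↔ y ∈ V := by
  rw [← mem_preimage, plus_pre]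

lemma inft_mem_plus {V : Set Y} : inft F ∈ plus F V := Or.inl rfl

lemma plus_open {V : Set Y} (hV : IsOpen V) (hVF : V ∈ F) : IsOpen (plus F V) :=
  ⟨by rwa [plus_pre], fun _ => by rwa [plus_pre]⟩

lemma plus_closed {C : Set Y} (hC : IsClosed C) : IsClosed (plus F C) := by
  rw [← isOpen_compl_iff]
  refine ⟨?_, fun h => absurd inft_mem_plus h⟩
  rw [preimage_compl, plus_pre]
  exact hC.isOpen_compl

lemma mem_nhds_inft (hop : ∀ W ∈ F, ∃ V ∈ F, V ⊆ W ∧ IsOpen V) {W : Set (Ext F)} :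
    W ∈ 𝓝 (inft F) ↔ inft F ∈ W ∧ inc F ⁻¹' W ∈ F := by
  constructor
  · intro h
    obtain ⟨U, hU, hUo, hm⟩ := mem_nhds_iff.1 h
    exact ⟨hU hm, Filter.mem_of_superset (hUo.2 hm) (preimage_mono hU)⟩
  · rintro ⟨h1, h2⟩
    obtain ⟨V, hV, hVW, hVo⟩ := hop _ h2
    refine mem_nhds_iff.2 ⟨plus F V, ?_, plus_open hVo hV, inft_mem_plus⟩
    rintro x (rfl | ⟨y, hy, rfl⟩)
    · exact h1
    · exact hVW hy

lemma ext_normal [NormalSpace Y] (hop : ∀ W ∈ F, ∃ V ∈ F, V ⊆ W ∧ IsOpen V)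
    (hcl : ∀ W ∈ F, ∃ V ∈ F, V ⊆ W ∧ IsClosed V) : NormalSpace (Ext F) := by
  have aux : ∀ s t : Set (Ext F), IsClosed s → IsClosed t → Disjoint s t → inft F ∉ t →
      SeparatedNhds s t := by
    intro s t hs ht hst hn
    have h1 : inc F ⁻¹' tᶜ ∈ F := ht.isOpen_compl.2 hn
    obtain ⟨C, hC, hCt, hCc⟩ := hcl _ h1
    obtain ⟨V, hV, hVC, hVo⟩ := hop _ hC
    obtain ⟨P, Q, hP, hQ, hsP, htQ, hPQ⟩ := normal_separation
      (hs.preimage inc_openEmb.continuous) (ht.preimage inc_openEmb.continuous)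
      (hst.preimage (inc F))
    refine ⟨inc F '' P ∪ plus F V, inc F '' (Q \ C), ?_, ?_, ?_, ?_, ?_⟩
    · exact (inc_openEmb.isOpenMap _ hP).union (plus_open hVo hV)
    · exact inc_openEmb.isOpenMap _ (hQ.sdiff hCc)
    · intro x hx
      rcases ext_cases x with rfl | ⟨y, rfl⟩
      · exact Or.inr inft_mem_plus
      · exact Or.inl ⟨y, hsP hx, rfl⟩
    · intro x hx
      rcases ext_cases x with rfl | ⟨y, rfl⟩
      · exact absurd hx hn
      · exact ⟨y, ⟨htQ hx, fun h => hCt h hx⟩, rfl⟩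
    · rw [Set.disjoint_left]
      rintro x hx ⟨y, ⟨hyQ, hyC⟩, rfl⟩
      rcases hx with ⟨z, hz, hzy⟩ | hx
      · rw [inc_inj hzy] at hz
        exact Set.disjoint_left.1 hPQ hz hyQ
      · exact hyC (hVC (inc_mem_plus.1 hx))
  refine ⟨fun s t hs ht hst => ?_⟩
  by_cases hn : inft F ∈ t
  · exact (aux t s ht hs hst.symm (fun h => Set.disjoint_left.1 hst h hn)).symm
  · exact aux s t hs ht hst hn

lemma ext_gdelta (hY : ∀ C : Set Y, IsClosed C → IsGδ C)
    (hop : ∀ W ∈ F, ∃ V ∈ F, V ⊆ W ∧ IsOpen V)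
    (hseq : ∃ U : ℕ → Set Y, (∀ n, U n ∈ F) ∧ ⋂ n, U n = ∅) (C : Set (Ext F)) (hC : IsClosed C) :
    IsGδ C := by
  have h1 : IsGδ (inc F '' (inc F ⁻¹' C)) := by
    obtain ⟨f, hf, hfe⟩ := isGδ_iff_eq_iInter_nat.1 (hY _ (hC.preimage inc_openEmb.continuous))
    rw [hfe, (inc_inj.injOn).image_iInter_eq]
    exact IsGδ.iInter fun n => (inc_openEmb.isOpenMap _ (hf n)).isGδ
  have h2 : IsGδ ({inft F} : Set (Ext F)) := by
    obtain ⟨U, hU, hUe⟩ := hseq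
    choose V hV hVU hVo using fun n => hop _ (hU n)
    have : ({inft F} : Set (Ext F)) = ⋂ n, plus F (V n) := by
      ext x
      rcases ext_cases x with rfl | ⟨y, rfl⟩
      · simp [inft_mem_plus]
      · simp only [mem_singleton_iff, mem_iInter, inc_mem_plus]
        refine ⟨fun h => absurd h (inc_ne y), fun h => ?_⟩
        have : y ∈ ⋂ n, U n := mem_iInter.2 fun n => hVU n (h n)
        rw [hUe] at this
        exact absurd this (notMem_empty y)
    rw [this]
    exact IsGδ.iInter fun n => (plus_open (hVo n) (hV n)).isGδ
  by_cases hn : inft F ∈ C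
  · have : C = inc F '' (inc F ⁻¹' C) ∪ {inft F} := by
      ext x
      rcases ext_cases x with rfl | ⟨y, rfl⟩
      · simp [hn]
      · simp only [mem_union, mem_singleton_iff, inc_ne, or_false]
        exact ⟨fun h => ⟨y, h, rfl⟩, fun ⟨z, hz, h⟩ => h ▸ hz⟩
    rw [this]; exact h1.union h2
  · have : C = inc F '' (inc F ⁻¹' C) := by
      ext x
      rcases ext_cases x with rfl | ⟨y, rfl⟩
      · exact ⟨fun h => absurd h hn, fun h => absurd h (inft_notMem _)⟩
      · exact ⟨fun h => ⟨y, h, rfl⟩, fun ⟨z, hz, h⟩ => h ▸ hz⟩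
    rw [this]; exact h1

lemma ext_almost [TopologicalSpace.MetrizableSpace Y] (hop : ∀ W ∈ F, ∃ V ∈ F, V ⊆ W ∧ IsOpen V)
    (hcl : ∀ W ∈ F, ∃ V ∈ F, V ⊆ W ∧ IsClosed V)
    (hseq : ∃ U : ℕ → Set Y, (∀ n, U n ∈ F) ∧ ⋂ n, U n = ∅) : AlmostMetrizable (Ext F) := by
  letI := TopologicalSpace.metrizableSpaceMetric Y
  refine ⟨⟨ext_normal hop hcl, ext_gdelta (fun C hC => hC.isGδ) hop hseq⟩, inft F, ?_⟩
  have h : ({inft F}ᶜ : Set (Ext F)) = Set.range (inc F) := by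
    ext x
    rcases ext_cases x with rfl | ⟨y, rfl⟩
    · simp [inc_ne]
    · simp [inc_ne]
  rw [h]
  exact (inc_openEmb (F := F)).isEmbedding.toHomeomorph.symm.isEmbedding.metrizableSpace

/-- homeomorphisms fixing infinity restrict -/
lemma ext_restrict {F G : Filter Y} (e : Ext F ≃ₜ Ext G) (he : e (inft F) = inft G) :
    ∃ g : Y ≃ₜ Y, ∀ y, e (inc F y) = inc G (g y) := by
  have h1 : ∀ y, ∃ z, e (inc F y) = inc G z := by
    intro y
    rcases ext_cases (e (inc F y)) with h | h
    · rw [← he] at h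
      exact absurd (e.injective h) (inc_ne y)
    · exact h
  have he' : e.symm (inft G) = inft F := by rw [← he]; simp
  have h2 : ∀ y, ∃ z, e.symm (inc G y) = inc F z := by
    intro y
    rcases ext_cases (e.symm (inc G y)) with h | h
    · rw [← he'] at h
      exact absurd (e.symm.injective h) (inc_ne y)
    · exact h
  choose f hf using h1
  choose f' hf' using h2
  refine ⟨⟨⟨f, f', ?_, ?_⟩, ?_, ?_⟩, hf⟩
  · intro y
    apply inc_inj (F := F)
    rw [← hf', ← hf]; simp
  · intro y
    apply inc_inj (F := G)
    rw [← hf, ← hf']; simp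
  · change Continuous f
    rw [(inc_openEmb (F := G)).isInducing.continuous_iff]
    have : inc G ∘ f = e ∘ inc F := by ext y; exact (hf y).symm
    rw [this]; exact e.continuous.comp inc_openEmb.continuous
  · change Continuous f'
    rw [(inc_openEmb (F := F)).isInducing.continuous_iff]
    have : inc F ∘ f' = e.symm ∘ inc G := by ext y; exact (hf' y).symm
    rw [this]; exact e.symm.continuous.comp inc_openEmb.continuous

end ext

section main
variable {O : Type} [LinearOrder O] [TopologicalSpace O] [DiscreteTopology O]
  {E : Type} [NormedAddCommGroup E] [NormedSpace ℝ E] (v : List (ℕ × O) → E)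
  {Λ : Type} (B : Λ → Set O) (c : O → ℕ) (T : Set Λ)

def GG (Φ : Finset Λ) (n : ℕ) : Set O := {o | n ≤ c o ∧ ∀ i ∈ Φ, (o ∈ B i ↔ i ∈ T)}

def VV (Φ : Finset Λ) (n : ℕ) : Set (YT v) := {y | (n : ℝ) < |y.1.2.2| ∨ y.1.1 ∈ GG B c T Φ n}

lemma VV_anti {Φ Ψ : Finset Λ} {n m : ℕ} (h : Φ ⊆ Ψ) (hn : n ≤ m) :
    VV v B c T Ψ m ⊆ VV v B c T Φ n := by
  rintro y (hy | hy)
  · left; exact lt_of_le_of_lt (by exact_mod_cast hn) hy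
  · right; exact ⟨hn.trans hy.1, fun i hi => hy.2 i (h hi)⟩

def fil : Filter (YT v) where
  sets := {W | ∃ Φ n, VV v B c T Φ n ⊆ W}
  univ_sets := ⟨∅, 0, subset_univ _⟩
  sets_of_superset := fun ⟨Φ, n, h⟩ h' => ⟨Φ, n, h.trans h'⟩
  inter_sets := by
    classical
    rintro x y ⟨Φ, n, h⟩ ⟨Ψ, m, h'⟩
    exact ⟨Φ ∪ Ψ, max n m, subset_inter
      ((VV_anti v B c T Finset.subset_union_left (le_max_left _ _)).trans h)
      ((VV_anti v B c T Finset.subset_union_right (le_max_right _ _)).trans h')⟩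

instance instMetrYT : TopologicalSpace.MetrizableSpace (YT v) := by
  haveI : TopologicalSpace.MetrizableSpace O := inferInstance
  haveI : TopologicalSpace.MetrizableSpace (O × E × ℝ) := inferInstance
  exact IsEmbedding.subtypeVal.metrizableSpace

variable {v B c T}

lemma mem_fil {W : Set (YT v)} : W ∈ fil v B c T ↔ ∃ Φ n, VV v B c T Φ n ⊆ W := Iff.rfl

lemma VV_mem (Φ : Finset Λ) (n : ℕ) : VV v B c T Φ n ∈ fil v B c T := ⟨Φ, n, Subset.rfl⟩

lemma VV_open (Φ : Finset Λ) (n : ℕ) : IsOpen (VV v B c T Φ n) := by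
  have h2 : IsOpen ((fun y : YT v => y.1.1) ⁻¹' GG B c T Φ n) := (isOpen_discrete _).preimage cont_idx
  have h1 : IsOpen {y : YT v | (n : ℝ) < |y.1.2.2|} := isOpen_lt continuous_const cont_t.abs
  exact h1.union h2

lemma fil_open : ∀ W ∈ fil v B c T, ∃ V ∈ fil v B c T, V ⊆ W ∧ IsOpen V := by
  rintro W ⟨Φ, n, h⟩
  exact ⟨_, VV_mem Φ n, h, VV_open Φ n⟩

lemma fil_closed : ∀ W ∈ fil v B c T, ∃ V ∈ fil v B c T, V ⊆ W ∧ IsClosed V := by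
  rintro W ⟨Φ, n, h⟩
  refine ⟨{y | (n : ℝ) + 1 ≤ |y.1.2.2|} ∪ {y | y.1.1 ∈ GG B c T Φ n}, ⟨Φ, n + 1, ?_⟩, ?_, ?_⟩
  · rintro y (hy | hy)
    · left; push_cast at hy; exact hy.le
    · right; exact ⟨(Nat.le_succ n).trans hy.1, hy.2⟩
  · refine Subset.trans ?_ h
    rintro y (hy | hy)
    · left; have : (n : ℝ) + 1 ≤ |y.1.2.2| := hy
      linarith
    · right; exact hy
  · have h2 : IsClosed ((fun y : YT v => y.1.1) ⁻¹' GG B c T Φ n) :=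
      (isClosed_discrete _).preimage cont_idx
    have h1 : IsClosed {y : YT v | (n : ℝ) + 1 ≤ |y.1.2.2|} :=
      isClosed_le continuous_const cont_t.abs
    exact h1.union h2

lemma fil_seq : ∃ U : ℕ → Set (YT v), (∀ n, U n ∈ fil v B c T) ∧ ⋂ n, U n = ∅ := by
  refine ⟨fun n => VV v B c T ∅ n, fun n => VV_mem _ _, ?_⟩
  rw [eq_empty_iff_forall_notMem]
  intro y hy
  rw [mem_iInter] at hy
  obtain ⟨n, hn⟩ := exists_nat_gt |y.1.2.2|
  rcases hy (max n (c y.1.1 + 1)) with h | h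
  · have : (n : ℝ) ≤ ((max n (c y.1.1 + 1) : ℕ) : ℝ) := by exact_mod_cast le_max_left _ _
    linarith
  · have h1 := h.1
    have h2 := le_max_right n (c y.1.1 + 1)
    omega

lemma join_inft (Φ : Finset Λ) (n : ℕ) (y : YT v) (hy : y ∈ VV v B c T Φ n) :
    JoinedIn (plus (fil v B c T) (VV v B c T Φ n)) (inc _ y) (inft _) := by
  classical
  obtain ⟨σ, hσ⟩ : ∃ σ : ℝ, ∀ r, abs (y.1.2.2 + σ * |r|) = |y.1.2.2| + |r| := by
    rcases le_total 0 y.1.2.2 with h | h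
    · refine ⟨1, fun r => ?_⟩
      rw [abs_of_nonneg h, abs_of_nonneg (by positivity)]; ring
    · refine ⟨-1, fun r => ?_⟩
      rw [abs_of_nonpos h, abs_of_nonpos (by linarith [abs_nonneg r])]; ring
  have key : ∀ r : ℝ, y.1.2.2 + σ * |r| ≠ 0 ∨ ∃ s, Valid y.1.1 s ∧ v s = y.1.2.1 := by
    intro r
    by_cases h : y.1.2.2 = 0
    · right
      rcases y.2 with h' | h'
      · exact absurd h h'
      · exact h'
    · left
      rw [← abs_pos, hσ]
      have := abs_pos.2 h
      positivity
  let γ : ℝ → YT v := fun r => ⟨(y.1.1, y.1.2.1, y.1.2.2 + σ * |r|), key r⟩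
  have hγc : Continuous γ := by
    apply Continuous.subtype_mk
    fun_prop
  let f : ℝ → Ext (fil v B c T) := fun s => if s < 1 then inc _ (γ (s / (1 - s))) else inft _
  have hf1 : ∀ s, s < 1 → f s = inc _ (γ (s / (1 - s))) := fun s hs => if_pos hs
  have hf2 : f 1 = inft _ := if_neg (lt_irrefl _)
  refine JoinedIn.ofLine (f := f) ?_ ?_ hf2 ?_
  · intro s hs
    rcases lt_or_eq_of_le hs.2 with h | h
    · apply ContinuousAt.continuousWithinAt
      have h1 : f =ᶠ[𝓝 s] fun s => inc _ (γ (s / (1 - s))) := by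
        filter_upwards [Iio_mem_nhds h] with x hx
        exact hf1 x hx
      refine ContinuousAt.congr ?_ h1.symm
      have h2 : ContinuousAt (fun s : ℝ => s / (1 - s)) s :=
        continuousAt_id.div (by fun_prop) (by linarith)
      exact (inc_openEmb.continuous.comp hγc).continuousAt.comp h2
    · subst h
      intro W hW
      rw [hf2, mem_nhds_inft fil_open] at hW
      obtain ⟨hW1, Ψ, m, hW2⟩ := hW
      have h3 : ∀ᶠ s : ℝ in 𝓝 1, (m : ℝ) * (1 - s) < s := by
        apply ContinuousAt.eventually_lt (by fun_prop) continuousAt_id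
        simp
      have h4 : ∀ᶠ s : ℝ in 𝓝[unitInterval] 1, f s ∈ W := by
        filter_upwards [nhdsWithin_le_nhds h3, self_mem_nhdsWithin] with s hs hsI
        rcases lt_or_eq_of_le hsI.2 with h | h
        · rw [hf1 s h]
          apply hW2
          left
          change (m : ℝ) < abs (y.1.2.2 + σ * |s / (1 - s)|)
          rw [hσ]
          have h5 : (m : ℝ) < s / (1 - s) := by
            rw [lt_div_iff₀ (by linarith)]; exact hs
          linarith [abs_nonneg y.1.2.2, le_abs_self (s / (1 - s))]
        · rw [h, hf2]; exact hW1
      exact h4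
  · rw [hf1 0 one_pos]
    congr 1
    apply Subtype.ext
    simp [γ]
  · rintro _ ⟨s, hs, rfl⟩
    rcases lt_or_eq_of_le hs.2 with h | h
    · rw [hf1 s h, inc_mem_plus]
      rcases hy with hy | hy
      · left
        change (n : ℝ) < abs (y.1.2.2 + σ * |s / (1 - s)|)
        rw [hσ]
        linarith [abs_nonneg (s / (1 - s))]
      · right; exact hy
    · rw [h, hf2]; exact inft_mem_plus

lemma plus_pathConn (Φ : Finset Λ) (n : ℕ) :
    IsPathConnected (plus (fil v B c T) (VV v B c T Φ n)) := by
  refine ⟨inft _, inft_mem_plus, ?_⟩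
  rintro x (rfl | ⟨y, hy, rfl⟩)
  · exact JoinedIn.refl inft_mem_plus
  · exact (join_inft Φ n y hy).symm

lemma ext_pathConn (hc : ∀ o, 0 ≤ c o) : PathConnectedSpace (Ext (fil v B c T)) := by
  rw [pathConnectedSpace_iff_univ]
  convert plus_pathConn (v := v) (B := B) (c := c) (T := T) ∅ 0
  symm
  rw [eq_univ_iff_forall]
  intro x
  rcases ext_cases x with rfl | ⟨y, rfl⟩
  · exact inft_mem_plus
  · rw [inc_mem_plus]
    right; exact ⟨hc _, by simp⟩

lemma ext_locPathConn : LocPathConnectedSpace (Ext (fil v B c T)) := by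
  refine ⟨fun x => Filter.hasBasis_self.2 fun W hW => ?_⟩
  rcases ext_cases x with rfl | ⟨y, rfl⟩
  · rw [mem_nhds_inft fil_open] at hW
    obtain ⟨hW1, Φ, n, hW2⟩ := hW
    refine ⟨_, (plus_open (VV_open Φ n) (VV_mem Φ n)).mem_nhds inft_mem_plus, plus_pathConn Φ n, ?_⟩
    rintro x (rfl | ⟨y, hy, rfl⟩)
    · exact hW1
    · exact hW2 hy
  · rw [← inc_openEmb.map_nhds_eq] at hW
    obtain ⟨ε, hε, hεW⟩ := (nhds_basis y).mem_iff.1 hW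
    obtain ⟨δ, hδ, hδε, hδ2⟩ : ∃ δ > 0, δ ≤ ε ∧ (y.1.2.2 = 0 ∨ δ ≤ |y.1.2.2|) := by
      by_cases h : y.1.2.2 = 0
      · exact ⟨ε, hε, le_rfl, Or.inl h⟩
      · exact ⟨min ε |y.1.2.2|, lt_min hε (abs_pos.2 h), min_le_left _ _, Or.inr (min_le_right _ _)⟩
    refine ⟨inc _ '' (cyl v y.1.1 (Metric.ball y.1.2 δ)), ?_, ?_, ?_⟩
    · rw [← inc_openEmb.map_nhds_eq]
      exact Filter.image_mem_map ((nhds_basis y).mem_of_mem hδ)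
    · apply IsPathConnected.image _ inc_openEmb.continuous
      refine ⟨y, ⟨rfl, Metric.mem_ball_self hδ⟩, ?_⟩
      intro z hz
      exact (joined_ball y hδ hδ2 z hz).symm
    · rintro _ ⟨z, hz, rfl⟩
      exact hεW ⟨hz.1, Metric.ball_subset_ball hδε hz.2⟩

/-- local base at infinity -/
lemma local_base (hind : ∀ (Φ : Finset Λ) (T : Set Λ) (k : ℕ),
      ∃ o, k ≤ c o ∧ ∀ i ∈ Φ, (o ∈ B i ↔ i ∈ T)) (𝓑 : Set (Set (Ext (fil v B c T))))
    (h1 : ∀ b ∈ 𝓑, b ∈ 𝓝 (inft (fil v B c T)))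
    (h2 : ∀ U ∈ 𝓝 (inft (fil v B c T)), ∃ b ∈ 𝓑, b ⊆ U) : #Λ ≤ #𝓑 * ℵ₀ := by
  classical
  have h3 : ∀ b : 𝓑, ∃ Φ n, VV v B c T Φ n ⊆ inc _ ⁻¹' b.1 := fun b =>
    ((mem_nhds_inft fil_open).1 (h1 b.1 b.2)).2
  choose Φ n hΦ using h3
  have h4 : ∀ i : Λ, ∃ b : 𝓑, i ∈ Φ b := by
    intro i
    obtain ⟨b, hb, hbU⟩ := h2 _ ((plus_open (VV_open {i} 0) (VV_mem {i} 0)).mem_nhds inft_mem_plus)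
    refine ⟨⟨b, hb⟩, ?_⟩
    by_contra hi
    obtain ⟨o, ho, hoi⟩ := hind (insert i (Φ ⟨b, hb⟩)) {j | if j = i then j ∉ T else j ∈ T} (n ⟨b, hb⟩)
    have h5 : root v o ∈ VV v B c T (Φ ⟨b, hb⟩) (n ⟨b, hb⟩) := by
      right
      refine ⟨ho, fun j hj => ?_⟩
      have hji : j ≠ i := fun h => hi (h ▸ hj)
      have := hoi j (Finset.mem_insert_of_mem hj)
      change o ∈ B j ↔ j ∈ T
      simpa [hji] using this
    have h6 : root v o ∈ VV v B c T {i} 0 := inc_mem_plus.1 (hbU (hΦ _ h5))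
    rcases h6 with h6 | h6
    · simp [root, pt] at h6
    · have h7 := h6.2 i (by simp)
      have h8 := hoi i (Finset.mem_insert_self _ _)
      have h9 : (root v o).1.1 = o := rfl
      rw [h9, h8] at h7
      simp at h7
  choose b hb using h4
  have h5 : #Λ ≤ #(Σ b : 𝓑, Φ b) :=
    Cardinal.mk_le_of_injective (f := fun i => (⟨b i, ⟨i, hb i⟩⟩ : Σ b : 𝓑, Φ b)) (by
      intro i j hij
      have := congrArg (fun x : (Σ b : 𝓑, Φ b) => (x.2 : Λ)) hij
      exact this)
  refine h5.trans ?_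
  rw [Cardinal.mk_sigma, ← Cardinal.sum_const']
  exact Cardinal.sum_le_sum _ _ fun b => (Cardinal.mk_le_aleph0)

lemma not_cg (hind : ∀ (Φ : Finset Λ) (T : Set Λ) (k : ℕ),
      ∃ o, k ≤ c o ∧ ∀ i ∈ Φ, (o ∈ B i ↔ i ∈ T)) (hΛ : ℵ₀ < #Λ) :
    ¬ (𝓝 (inft (fil v B c T))).IsCountablyGenerated := by
  intro h
  obtain ⟨x, hx⟩ := (𝓝 (inft (fil v B c T))).exists_antitone_basis
  have := local_base hind (Set.range x) (by rintro _ ⟨n, rfl⟩; exact hx.mem n)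
    (by intro U hU; obtain ⟨n, hn⟩ := hx.mem_iff.1 hU; exact ⟨_, ⟨n, rfl⟩, hn⟩)
  have h2 : #(Set.range x) ≤ ℵ₀ := Cardinal.mk_le_aleph0_iff.2 (Set.countable_range x).to_subtype
  have h3 : #(Set.range x) * ℵ₀ ≤ ℵ₀ := by
    calc _ ≤ ℵ₀ * ℵ₀ := mul_le_mul_left h2 _
      _ = ℵ₀ := Cardinal.aleph0_mul_aleph0
  exact absurd (this.trans h3) (not_le.2 hΛ)

lemma cg_inc (y : YT v) : (𝓝 (inc (fil v B c T) y)).IsCountablyGenerated := by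
  rw [← inc_openEmb.map_nhds_eq]
  letI := TopologicalSpace.metrizableSpaceMetric (YT v)
  haveI : (𝓝 y).IsCountablyGenerated := inferInstance
  exact Filter.map.isCountablyGenerated _ _

lemma homeo_eq [WellFoundedLT O] (hr : 1 < Module.rank ℝ (E × ℝ))
    (hP1 : ∀ s, ∃ ε > 0, ∀ t, ‖v t - v s‖ < ε → s <:+ t)
    (hP2 : ∀ s n b, ‖v ((n, b) :: s) - v s‖ ≤ 1 / ((n : ℝ) + 1))
    (hind : ∀ (Φ : Finset Λ) (T : Set Λ) (k : ℕ),
      ∃ o, k ≤ c o ∧ ∀ i ∈ Φ, (o ∈ B i ↔ i ∈ T)) (hΛ : ℵ₀ < #Λ) {T T' : Set Λ}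
    (e : Ext (fil v B c T) ≃ₜ Ext (fil v B c T')) : T = T' := by
  classical
  have he : e (inft _) = inft _ := by
    rcases ext_cases (e (inft _)) with h | ⟨y, h⟩
    · exact h
    · exfalso
      apply not_cg (v := v) (T := T) hind hΛ
      have h1 : (𝓝 (e (inft _))).IsCountablyGenerated := by rw [h]; exact cg_inc y
      rw [e.isInducing.nhds_eq_comap]
      infer_instance
  obtain ⟨g, hg⟩ := ext_restrict e he
  have hroot : ∀ o, e (inc _ (root v o)) = inc _ (root v o) := by
    intro o; rw [hg, fix_root hr hP1 hP2]
  ext i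
  have h1 : e.symm ⁻¹' (plus _ (VV v B c T {i} 0)) ∈ 𝓝 (inft (fil v B c T')) := by
    apply e.symm.continuous.continuousAt
    rw [← he, e.symm_apply_apply]
    exact (plus_open (VV_open {i} 0) (VV_mem {i} 0)).mem_nhds inft_mem_plus
  obtain ⟨_, Φ, n, h2⟩ := (mem_nhds_inft fil_open).1 h1
  obtain ⟨o, ho, hoi⟩ := hind (insert i Φ) T' n
  have h3 : root v o ∈ VV v B c T' Φ n := Or.inr ⟨ho, fun j hj => hoi j (Finset.mem_insert_of_mem hj)⟩
  have h4 := h2 h3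
  rw [mem_preimage, mem_preimage, ← hroot o, e.symm_apply_apply, inc_mem_plus] at h4
  rcases h4 with h4 | h4
  · simp [root, pt] at h4
  · have h5 : o ∈ B i ↔ i ∈ T := h4.2 i (by simp)
    rw [← h5, hoi i (Finset.mem_insert_self _ _)]

lemma ext_card (κ : Cardinal.{0}) (hκ : Cardinal.continuum ≤ κ) (hO : #O = κ) (hE : #E ≤ κ) :
    #(Ext (fil v B c T)) = κ ∧ #(YT v) ≤ κ := by
  have hκ0 : ℵ₀ ≤ κ := Cardinal.aleph0_le_continuum.trans hκ
  have h1 : #(YT v) ≤ κ := by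
    refine (Cardinal.mk_subtype_le _).trans ?_
    simp only [Cardinal.mk_prod, Cardinal.lift_id, hO, Cardinal.mk_real]
    calc κ * (#E * 𝔠) ≤ κ * (κ * κ) := by gcongr
      _ = κ := by rw [Cardinal.mul_eq_self hκ0, Cardinal.mul_eq_self hκ0]
  refine ⟨le_antisymm ?_ ?_, h1⟩
  · have : #(Ext (fil v B c T)) = #(YT v) + 1 := Cardinal.mk_option
    rw [this]
    calc #(YT v) + 1 ≤ κ + κ := add_le_add h1 (Cardinal.one_le_aleph0.trans hκ0)
      _ = κ := Cardinal.add_eq_self hκ0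
  · rw [← hO]
    apply Cardinal.mk_le_of_injective (f := fun o => inc (fil v B c T) (root v o))
    intro o o' h
    exact congrArg (fun y : YT v => y.1.1) (inc_inj h)

lemma ext_weight (κ lam : Cardinal.{0}) (hκ : Cardinal.continuum ≤ κ) (hl : κ ≤ lam) (hO : #O = κ)
    (hE : #E ≤ κ) (hΛ : #Λ = lam) (hind : ∀ (Φ : Finset Λ) (T : Set Λ) (k : ℕ),
      ∃ o, k ≤ c o ∧ ∀ i ∈ Φ, (o ∈ B i ↔ i ∈ T)) : tweight (Ext (fil v B c T)) = lam := by
  have hκ0 : ℵ₀ ≤ κ := Cardinal.aleph0_le_continuum.trans hκ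
  have hl0 : ℵ₀ < lam := Cardinal.aleph0_lt_continuum.trans_le (hκ.trans hl)
  have lower : ∀ 𝓑 : Set (Set (Ext (fil v B c T))), TopologicalSpace.IsTopologicalBasis 𝓑 → lam ≤ #𝓑 := by
    intro 𝓑 h𝓑
    have h1 := local_base (v := v) (T := T) hind {b ∈ 𝓑 | inft _ ∈ b}
      (fun b hb => (h𝓑.isOpen hb.1).mem_nhds hb.2)
      (fun U hU => by
        obtain ⟨b, hb, hm, hbU⟩ := h𝓑.mem_nhds_iff.1 hU
        exact ⟨b, ⟨hb, hm⟩, hbU⟩)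
    have h2 : #({b ∈ 𝓑 | inft _ ∈ b} : Set _) ≤ #𝓑 := Cardinal.mk_le_mk_of_subset (fun b hb => hb.1)
    have h3 : lam ≤ #𝓑 * ℵ₀ := by
      rw [← hΛ]; exact h1.trans (mul_le_mul_left h2 _)
    have h4 : lam ≤ max #𝓑 ℵ₀ := by
      refine h3.trans ((Cardinal.mul_le_max _ _).trans ?_)
      simp
    rcases le_max_iff.1 h4 with h | h
    · exact h
    · exact absurd h (not_le.2 hl0)
  have upper : ∃ 𝓑 : Set (Set (Ext (fil v B c T))), TopologicalSpace.IsTopologicalBasis 𝓑 ∧ #𝓑 ≤ lam := by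
    letI := TopologicalSpace.metrizableSpaceMetric (YT v)
    let f1 : YT v × ℕ → Set (Ext (fil v B c T)) := fun p => inc _ '' Metric.ball p.1 (1 / ((p.2 : ℝ) + 1))
    let f2 : Finset Λ × ℕ → Set (Ext (fil v B c T)) := fun p => plus _ (VV v B c T p.1 p.2)
    refine ⟨Set.range f1 ∪ Set.range f2, ?_, ?_⟩
    · apply TopologicalSpace.isTopologicalBasis_of_isOpen_of_nhds
      · rintro u (⟨p, rfl⟩ | ⟨p, rfl⟩)
        · exact inc_openEmb.isOpenMap _ Metric.isOpen_ball
        · exact plus_open (VV_open _ _) (VV_mem _ _)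
      · intro x U hx hU
        rcases ext_cases x with rfl | ⟨y, rfl⟩
        · obtain ⟨Φ, n, h⟩ := hU.2 hx
          refine ⟨_, Or.inr ⟨(Φ, n), rfl⟩, inft_mem_plus, ?_⟩
          rintro x (rfl | ⟨y, hy, rfl⟩)
          · exact hx
          · exact h hy
        · obtain ⟨ε, hε, h⟩ := Metric.isOpen_iff.1 hU.1 y hx
          obtain ⟨n, hn⟩ := exists_nat_one_div_lt hε
          refine ⟨_, Or.inl ⟨(y, n), rfl⟩, ⟨y, Metric.mem_ball_self (by positivity), rfl⟩, ?_⟩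
          rintro _ ⟨z, hz, rfl⟩
          exact h (Metric.ball_subset_ball hn.le hz)
    · have hinf : Infinite Λ := Cardinal.infinite_iff.2 (hΛ ▸ hl0.le)
      have h1 : #(Set.range f1) ≤ lam := by
        refine Cardinal.mk_range_le.trans ?_
        simp only [Cardinal.mk_prod, Cardinal.lift_id, Cardinal.mk_nat]
        calc #(YT v) * ℵ₀ ≤ lam * lam :=
              mul_le_mul' ((ext_card (v := v) (B := B) (c := c) (T := T) κ hκ hO hE).2.trans hl) hl0.le
          _ = lam := Cardinal.mul_eq_self hl0.le
      have h2 : #(Set.range f2) ≤ lam := by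
        refine Cardinal.mk_range_le.trans ?_
        simp only [Cardinal.mk_prod, Cardinal.lift_id, Cardinal.mk_nat, Cardinal.mk_finset_of_infinite, hΛ]
        calc lam * ℵ₀ ≤ lam * lam := mul_le_mul' le_rfl hl0.le
          _ = lam := Cardinal.mul_eq_self hl0.le
      calc _ ≤ #(Set.range f1) + #(Set.range f2) := Cardinal.mk_union_le _ _
        _ ≤ lam + lam := add_le_add h1 h2
        _ = lam := Cardinal.add_eq_self hl0.le
  obtain ⟨𝓑, h𝓑, hle⟩ := upper
  unfold tweight
  apply le_antisymm
  · refine le_trans (csInf_le' ?_) hle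
    exact ⟨𝓑, h𝓑, rfl⟩
  · refine le_csInf ⟨_, 𝓑, h𝓑, rfl⟩ ?_
    rintro _ ⟨𝓒, h𝓒, rfl⟩
    exact lower 𝓒 h𝓒

end main

end Stmt12

/-- Theorem 2: if `𝔠 ≤ κ ≤ λ ≤ 2 ^ κ`, then there exist `2 ^ λ` mutually
non-homeomorphic pathwise connected, locally pathwise connected, almost metrizable
spaces of cardinality `κ` and weight `λ`. -/
theorem stmt12 (κ lam : Cardinal) (h0 : Cardinal.continuum ≤ κ)
    (h1 : κ ≤ lam) (h2 : lam ≤ 2 ^ κ) :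
    ExistsNonHomeoFamily (2 ^ lam) (fun X t =>
      letI := t
      PathConnectedSpace X ∧ LocPathConnectedSpace X ∧ AlmostMetrizable X ∧
        #X = κ ∧ tweight X = lam) := by
  have hO : #κ.ord.ToType = κ := Cardinal.mk_ord_toType κ
  have hΛ : #lam.out = lam := Cardinal.mk_out lam
  have hl0 : ℵ₀ < lam := Cardinal.aleph0_lt_continuum.trans_le (h0.trans h1)
  have : Infinite κ.ord.ToType :=
    Cardinal.infinite_iff.2 (hO.symm ▸ Cardinal.aleph0_le_continuum.trans h0)
  letI : TopologicalSpace κ.ord.ToType := ⊥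
  haveI : DiscreteTopology κ.ord.ToType := ⟨rfl⟩
  obtain ⟨B, c, hind⟩ := Stmt12.exists_indep κ.ord.ToType lam.out (by rw [hO, hΛ]; exact h2)
  obtain ⟨E, iE, iE', v, hE, hr, hP1, hP2⟩ := Stmt12.exists_embed κ.ord.ToType κ hO h0
  refine ⟨Set lam.out, fun T => Stmt12.Ext (Stmt12.fil v B c T), fun T => inferInstance, ?_, ?_, ?_⟩
  · rw [Cardinal.mk_set, hΛ]
  · intro T
    exact ⟨Stmt12.ext_pathConn (fun o => Nat.zero_le _), Stmt12.ext_locPathConn,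
      Stmt12.ext_almost Stmt12.fil_open Stmt12.fil_closed Stmt12.fil_seq,
      (Stmt12.ext_card κ h0 hO hE).1, Stmt12.ext_weight κ lam h0 h1 hO hE hΛ hind⟩
  · intro T T' hne
    exact ⟨fun e => hne (Stmt12.homeo_eq hr hP1 hP2 hind (hΛ.symm ▸ hl0) e)⟩
end
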